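/- arXiv:2207.09681 — 2 statements merged into one kernel-verified Lean document; each statement's English description precedes it below -/
import Mathlib

section
/- Let k ≥ 1 and n ≥ 64k⁶. If G has the maximum spectral radius among all simple graphs on n vertices containing no k pairwise edge-disjoint cycles (i.e., with φ ≤ k−1), then G has a dominating vertex and e(G) ≥ e(G') for every simple graph G' on n vertices that has a dominating vertex and contains no k pairwise edge-disjoint cycles. (In other words, every spectral-extremal graph is also edge-extremal among n-vertex graphs of maximum degree n−1 without k edge-disjoint cycles.) -/
open scoped Classical

namespace PaperEDC

/-- `G` contains `m` pairwise edge-disjoint cycles. -/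
def HasEDC {V : Type*} (G : SimpleGraph V) (m : ℕ) : Prop :=
  ∃ c : Fin m → Σ v : V, G.Walk v v,
    (∀ i, (c i).2.IsCycle) ∧
    ∀ i j, i ≠ j → ∀ e ∈ (c i).2.edges, e ∉ (c j).2.edges

/-- `φ(G)`: the maximum number of pairwise edge-disjoint cycles in `G`. -/
noncomputable def phi {V : Type*} (G : SimpleGraph V) : ℕ := sSup {m | HasEDC G m}

/-- `K₁ ∇ H`: the join of a single new vertex with `H`. -/
def joinK1 {V : Type*} (H : SimpleGraph V) : SimpleGraph (Option V) :=
  SimpleGraph.fromRel fun a b => a = none ∨ ∃ u v, a = some u ∧ b = some v ∧ H.Adj u v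

/-- `t(G)`: the number of triangles of `G`. -/
noncomputable def triCount {V : Type*} (G : SimpleGraph V) : ℕ :=
  Nat.card {s : Finset V // G.IsNClique 3 s}

/-- A triangle-cactus: a connected graph in which every edge lies on a cycle and every
cycle is a triangle. -/
def IsTriangleCactus {V : Type*} (G : SimpleGraph V) : Prop :=
  G.Connected ∧
  (∀ e ∈ G.edgeSet, ∃ (v : V) (w : G.Walk v v), w.IsCycle ∧ e ∈ w.edges) ∧
  ∀ (v : V) (w : G.Walk v v), w.IsCycle → w.length = 3

/-- `e(G)`: the number of edges of `G`. -/
noncomputable def ecard {V : Type*} (G : SimpleGraph V) : ℕ := Nat.card G.edgeSet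

/-- `ρ(G)`: the spectral radius (largest adjacency eigenvalue) of `G`. -/
noncomputable def specRad {V : Type*} [Fintype V] (G : SimpleGraph V) : ℝ :=
  sSup {x : ℝ | ∃ f : V → ℝ, f ≠ 0 ∧ ∀ v : V, ∑ u : V, (if G.Adj v u then f u else 0) = x * f v}

/-- adjacency indicator -/
noncomputable def av {V : Type*} (G : SimpleGraph V) (a b : V) : ℝ := if G.Adj a b then 1 else 0

lemma av_nonneg {V : Type*} (G : SimpleGraph V) (a b : V) : 0 ≤ av G a b := by
  unfold av; split_ifs <;> norm_num

lemma av_le_one {V : Type*} (G : SimpleGraph V) (a b : V) : av G a b ≤ 1 := by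
  unfold av; split_ifs <;> norm_num

lemma av_symm {V : Type*} (G : SimpleGraph V) (a b : V) : av G a b = av G b a := by
  unfold av; simp [G.adj_comm]

lemma av_self {V : Type*} (G : SimpleGraph V) (a : V) : av G a a = 0 := by
  unfold av; simp

lemma av_of {V : Type*} {G : SimpleGraph V} {a b : V} (h : G.Adj a b) : av G a b = 1 := by
  unfold av; simp [h]

lemma av_not {V : Type*} {G : SimpleGraph V} {a b : V} (h : ¬ G.Adj a b) : av G a b = 0 := by
  unfold av; simp [h]

/-- quadratic form -/
noncomputable def qf {V : Type*} [Fintype V] (G : SimpleGraph V) (y : V → ℝ) : ℝ :=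
  ∑ a, ∑ b, av G a b * (y a * y b)

lemma perron_aux {V : Type*} [Fintype V] [Nonempty V] (G : SimpleGraph V) :
    ∃ (μ : ℝ) (x : V → ℝ), (∀ v, 0 ≤ x v) ∧ x ≠ 0 ∧ (∀ v, ∑ u, av G v u * x u = μ * x v) ∧
      ∀ y : V → ℝ, qf G y ≤ μ * ∑ v, y v ^ 2 := by
  have hcont : Continuous (qf G) := by unfold qf; fun_prop
  have hscont : Continuous (fun y : V → ℝ => ∑ v, y v ^ 2) := by fun_prop
  let K : Set (V → ℝ) := {y | ∑ v, y v ^ 2 = 1}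
  have hKc : IsCompact K := by
    apply Metric.isCompact_of_isClosed_isBounded
    · exact isClosed_eq hscont continuous_const
    · rw [isBounded_iff_forall_norm_le]
      refine ⟨1, fun y hy => ?_⟩
      rw [pi_norm_le_iff_of_nonneg (by norm_num)]
      intro v
      have h1 : y v ^ 2 ≤ ∑ v, y v ^ 2 :=
        Finset.single_le_sum (f := fun v => y v ^ 2) (fun i _ => sq_nonneg _) (Finset.mem_univ v)
      rw [show ∑ v, y v ^ 2 = 1 from hy] at h1
      rw [Real.norm_eq_abs]
      exact (sq_le_one_iff_abs_le_one _).1 h1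
  have hKne : K.Nonempty := by
    obtain ⟨v0⟩ := ‹Nonempty V›
    refine ⟨fun v => if v = v0 then 1 else 0, ?_⟩
    simp [K]
  obtain ⟨x0, hx0, hmax⟩ := hKc.exists_isMaxOn hKne hcont.continuousOn
  set μ := qf G x0 with hμ
  have hray : ∀ y : V → ℝ, qf G y ≤ μ * ∑ v, y v ^ 2 := by
    intro y
    rcases eq_or_ne (∑ v, y v ^ 2) 0 with h0 | h0
    · have : ∀ v, y v = 0 := by
        intro v
        have := (Finset.sum_eq_zero_iff_of_nonneg (fun i _ => sq_nonneg (y i))).1 h0 v (Finset.mem_univ v)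
        exact pow_eq_zero_iff (two_ne_zero) |>.1 this
      simp [qf, this]
    · have hpos : 0 < ∑ v, y v ^ 2 := lt_of_le_of_ne (Finset.sum_nonneg fun i _ => sq_nonneg _) (Ne.symm h0)
      set S := ∑ v, y v ^ 2
      have hmem : (fun v => y v / √S) ∈ K := by
        simp only [K, Set.mem_ofPred_eq, div_pow, Real.sq_sqrt hpos.le, ← Finset.sum_div]
        exact div_self h0
      have h2 := hmax hmem
      have h3 : qf G (fun v => y v / √S) = qf G y / S := by
        unfold qf
        rw [Finset.sum_div]
        refine Finset.sum_congr rfl fun a _ => ?_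
        rw [Finset.sum_div]
        refine Finset.sum_congr rfl fun b _ => ?_
        rw [div_mul_div_comm, Real.mul_self_sqrt hpos.le]
        ring
      simp only [Set.mem_ofPred_eq] at h2
      rw [h3, div_le_iff₀ hpos] at h2
      exact h2
  let x : V → ℝ := fun v => |x0 v|
  have hxS : ∑ v, x v ^ 2 = 1 := by
    have h : ∑ v, x0 v ^ 2 = 1 := hx0
    simpa [x, sq_abs] using h
  have hqx : qf G x = μ := by
    apply le_antisymm
    · have := hray x; rwa [hxS, mul_one] at this
    · rw [hμ]; unfold qf
      refine Finset.sum_le_sum fun a _ => Finset.sum_le_sum fun b _ => ?_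
      refine mul_le_mul_of_nonneg_left ?_ (av_nonneg _ _ _)
      simp only [x, ← abs_mul]; exact le_abs_self _
  refine ⟨μ, x, fun v => abs_nonneg _, ?_, ?_, hray⟩
  · intro h; rw [h] at hxS; simp at hxS
  · intro v
    set g := ∑ u, av G v u * x u - μ * x v with hg
    have key : ∀ t : ℝ, 2 * t * g ≤ μ * t ^ 2 := by
      intro t
      have h1 := hray (fun a => x a + t * (if a = v then 1 else 0))
      have h2 : qf G (fun a => x a + t * (if a = v then 1 else 0)) =
          qf G x + 2 * t * ∑ u, av G v u * x u := by
        unfold qf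
        have : ∀ a b, av G a b * ((x a + t * (if a = v then 1 else 0)) * (x b + t * (if b = v then 1 else 0)))
            = av G a b * (x a * x b) + (if b = v then t * (av G a b * x a) else 0) +
              (if a = v then t * (av G a b * x b) else 0)
              + (if a = v then (if b = v then t ^ 2 * av G a b else 0) else 0) := by
          intro a b; split_ifs <;> ring
        simp only [this, Finset.sum_add_distrib, Finset.sum_ite_eq', Finset.mem_univ, if_true]
        have e3 : ∑ a, ∑ b, (if a = v then t * (av G a b * x b) else 0) = t * ∑ b, av G v b * x b := by
          rw [Finset.sum_comm]; simp [Finset.mul_sum]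
        have e4 : ∑ a, (if a = v then t ^ 2 * av G a v else 0) = 0 := by simp [av_self]
        have e5 : ∑ a, ∑ b, (if a = v then (if b = v then t ^ 2 * av G a b else 0) else 0) = 0 := by
          refine Finset.sum_eq_zero fun a _ => Finset.sum_eq_zero fun b _ => ?_
          split_ifs with h1 h2
          · subst h1; subst h2; simp [av_self]
          · rfl
          · rfl
        rw [e3, e5]
        simp only [← Finset.mul_sum, av_symm G _ v]
        ring
      have h3 : ∑ a, (x a + t * (if a = v then 1 else 0)) ^ 2 = 1 + 2 * t * x v + t ^ 2 := by
        have : ∀ a, (x a + t * (if a = v then 1 else 0)) ^ 2 = x a ^ 2 + (if a = v then 2 * t * x a + t ^ 2 else 0) := by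
          intro a; split_ifs <;> ring
        simp only [this, Finset.sum_add_distrib, hxS]
        simp; ring
      rw [h2, h3, hqx] at h1
      rw [hg]; nlinarith
    have hg0 : g = 0 := by
      by_contra hne
      have h1 := key (g / (|μ| + 1))
      have hp : 0 < |μ| + 1 := by positivity
      have : 2 * (g / (|μ| + 1)) * g ≤ |μ| * (g / (|μ| + 1)) ^ 2 :=
        h1.trans (mul_le_mul_of_nonneg_right (le_abs_self _) (sq_nonneg _))
      have e : 2 * (g / (|μ| + 1)) * g = 2 * (|μ| + 1) * (g / (|μ| + 1)) ^ 2 := by field_simp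
      rw [e] at this
      have hq : 0 < (g / (|μ| + 1)) ^ 2 := by positivity
      nlinarith [abs_nonneg μ]
    linarith

lemma perron {V : Type*} [Fintype V] [Nonempty V] (G : SimpleGraph V) :
    (∃ x : V → ℝ, (∀ v, 0 ≤ x v) ∧ x ≠ 0 ∧ (∀ v, ∑ u, av G v u * x u = specRad G * x v)) ∧
      ∀ y : V → ℝ, qf G y ≤ specRad G * ∑ v, y v ^ 2 := by
  obtain ⟨μ, x, h0, hne, he, hr⟩ := perron_aux G
  have conv : ∀ (f : V → ℝ) v, ∑ u : V, (if G.Adj v u then f u else 0) = ∑ u, av G v u * f u := by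
    intro f v; unfold av; simp
  have hμ : specRad G = μ := by
    unfold specRad
    apply IsGreatest.csSup_eq
    refine ⟨⟨x, hne, fun v => by rw [conv, he]⟩, ?_⟩
    rintro z ⟨f, hf, hz⟩
    have h1 := hr f
    have h2 : qf G f = z * ∑ v, f v ^ 2 := by
      unfold qf
      rw [Finset.mul_sum]
      refine Finset.sum_congr rfl fun a _ => ?_
      have := hz a
      rw [conv] at this
      rw [sq, ← mul_assoc, ← this, Finset.sum_mul]
      refine Finset.sum_congr rfl fun b _ => by ring
    rw [h2] at h1
    obtain ⟨v, hv⟩ := Function.ne_iff.1 hf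
    have hpos : 0 < ∑ v, f v ^ 2 :=
      Finset.sum_pos' (fun i _ => sq_nonneg _) ⟨v, Finset.mem_univ v, by
        have : f v ≠ 0 := hv
        positivity⟩
    exact le_of_mul_le_mul_right h1 hpos
  rw [hμ]
  exact ⟨⟨x, h0, hne, he⟩, hr⟩

lemma hasEDC_succ {V : Type*} {G G1 : SimpleGraph V} {m : ℕ} (hle : G1 ≤ G) {v : V}
    (C : G.Walk v v) (hC : C.IsCycle) (hd : ∀ e ∈ C.edges, e ∉ G1.edgeSet) (h : HasEDC G1 m) :
    HasEDC G (m + 1) := by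
  obtain ⟨c, hc, hdis⟩ := h
  have key : ∀ i, ∀ e ∈ ((c i).2.mapLe hle).edges, e ∈ (c i).2.edges := by
    intro i e he; rwa [SimpleGraph.Walk.edges_mapLe_eq_edges] at he
  refine ⟨Fin.cons ⟨v, C⟩ (fun i => ⟨(c i).1, (c i).2.mapLe hle⟩), ?_, ?_⟩
  · intro i
    refine Fin.cases ?_ (fun i => ?_) i
    · exact hC
    · exact (hc i).mapLe hle
  · intro i j
    refine Fin.cases ?_ (fun i => ?_) i <;> refine Fin.cases ?_ (fun j => ?_) j
    · intro h; exact absurd rfl h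
    · intro _ e he he'
      exact hd e he ((c j).2.edges_subset_edgeSet (key j e he'))
    · intro _ e he he'
      exact hd e he' ((c i).2.edges_subset_edgeSet (key i e he))
    · intro hij e he he'
      exact hdis i j (fun h => hij (by rw [h])) e (key i e he) (key j e he')

lemma hasEDC_zero {V : Type*} (G : SimpleGraph V) : HasEDC G 0 :=
  ⟨fun i => i.elim0, fun i => i.elim0, fun i => i.elim0⟩

lemma hasEDC_mono {V : Type*} {G : SimpleGraph V} {m k : ℕ} (hkm : k ≤ m) (h : HasEDC G m) :
    HasEDC G k := by
  obtain ⟨c, hc, hdis⟩ := h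
  refine ⟨fun i => c (Fin.castLE hkm i), fun i => hc _, fun i j hij => hdis _ _ ?_⟩
  intro h; exact hij (Fin.castLE_injective hkm h)

lemma cycle_edge {V : Type*} {G : SimpleGraph V} {v : V} (C : G.Walk v v) (hC : C.IsCycle) :
    ∃ e, e ∈ C.edges := by
  have h := hC.three_le_length
  rw [← C.length_edges] at h
  exact List.exists_mem_of_length_pos (by omega)

lemma hasEDC_bdd {V : Type*} [Fintype V] (G : SimpleGraph V) : BddAbove {m | HasEDC G m} := by
  refine ⟨Fintype.card (Sym2 V), ?_⟩
  rintro m ⟨c, hc, hdis⟩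
  choose f hf using fun i => cycle_edge _ (hc i)
  have hinj : Function.Injective f := by
    intro i j hij
    by_contra hne
    exact hdis i j hne (f i) (hf i) (hij ▸ hf j)
  simpa using Fintype.card_le_of_injective f hinj

lemma phi_le_iff {V : Type*} [Fintype V] (G : SimpleGraph V) {k : ℕ} (hk : 1 ≤ k) :
    phi G ≤ k - 1 ↔ ¬ HasEDC G k := by
  constructor
  · intro h hE
    have : k ≤ phi G := le_csSup (hasEDC_bdd G) hE
    omega
  · intro h
    by_contra hlt
    have h1 : HasEDC G (phi G) := Nat.sSup_mem (s := {m | HasEDC G m}) ⟨0, hasEDC_zero G⟩ (hasEDC_bdd G)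
    exact h (hasEDC_mono (by omega) h1)

/-- common neighbours -/
noncomputable def cn {V : Type*} [Fintype V] (G : SimpleGraph V) (u w : V) : Finset V :=
  Finset.univ.filter fun v => G.Adj u v ∧ G.Adj w v

lemma hasEDC_of_codeg {V : Type*} [Fintype V] (m : ℕ) : ∀ (G : SimpleGraph V) (u w : V), u ≠ w →
    2 * m ≤ (cn G u w).card → HasEDC G m := by
  induction m with
  | zero => intro G u w _ _; exact hasEDC_zero G
  | succ m ih =>
    intro G u w huw hcard
    obtain ⟨a, ha, b, hb, hab⟩ := Finset.one_lt_card.1 (show 1 < (cn G u w).card by omega)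
    simp only [cn, Finset.mem_filter, Finset.mem_univ, true_and] at ha hb
    let C : G.Walk u u := .cons ha.1 (.cons ha.2.symm (.cons hb.2 (.cons hb.1.symm .nil)))
    have hC : C.IsCycle := by
      have h1 := ha.1.ne; have h2 := ha.2.ne; have h3 := hb.1.ne; have h4 := hb.2.ne
      simp only [C, SimpleGraph.Walk.cons_isCycle_iff, SimpleGraph.Walk.cons_isPath_iff,
        SimpleGraph.Walk.edges_cons, SimpleGraph.Walk.edges_nil, SimpleGraph.Walk.support_cons,
        SimpleGraph.Walk.support_nil, SimpleGraph.Walk.isPath_iff_eq_nil]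
      simp
      grind
    have hCe : C.edges = [s(u, a), s(a, w), s(w, b), s(b, u)] := rfl
    refine hasEDC_succ (G.deleteEdges_le {e | e ∈ C.edges}) C hC ?_ (ih _ u w huw ?_)
    · intro e he; simp [he]
    · have hsub : ((cn G u w).erase a).erase b ⊆ cn (G.deleteEdges {e | e ∈ C.edges}) u w := by
        intro v hv
        simp only [cn, Finset.mem_erase, Finset.mem_filter, Finset.mem_univ, true_and] at hv
        simp only [cn, Finset.mem_filter, Finset.mem_univ, true_and, SimpleGraph.deleteEdges_adj,
          hCe]
        have h1 := ha.1.ne; have h2 := ha.2.ne; have h3 := hb.1.ne; have h4 := hb.2.ne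
        have h5 := hv.2.2.1.ne; have h6 := hv.2.2.2.ne
        refine ⟨⟨hv.2.2.1, ?_⟩, ⟨hv.2.2.2, ?_⟩⟩ <;> simp <;> grind
      have h1 := Finset.card_le_card hsub
      have h2 := Finset.pred_card_le_card_erase (s := cn G u w) (a := a)
      have h3 := Finset.pred_card_le_card_erase (s := (cn G u w).erase a) (a := b)
      omega

lemma cover {V : Type*} [Fintype V] (u : V) (m : ℕ) : ∀ (G : SimpleGraph V),
    ¬ HasEDC G (m + 1) → ∃ S : Finset V, S.card ≤ 2 * m ∧
      ∀ a b, G.Adj u a → G.Adj u b → G.Adj a b → a ∈ S ∨ b ∈ S := by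
  induction m with
  | zero =>
    intro G h
    refine ⟨∅, by simp, fun a b ha hb hab => (h ?_).elim⟩
    let C : G.Walk u u := .cons ha (.cons hab (.cons hb.symm .nil))
    have hC : C.IsCycle := by
      have h1 := ha.ne; have h2 := hb.ne; have h3 := hab.ne
      simp only [C, SimpleGraph.Walk.cons_isCycle_iff, SimpleGraph.Walk.cons_isPath_iff,
        SimpleGraph.Walk.edges_cons, SimpleGraph.Walk.edges_nil, SimpleGraph.Walk.support_cons,
        SimpleGraph.Walk.support_nil, SimpleGraph.Walk.isPath_iff_eq_nil]
      simp
      grind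
    exact hasEDC_succ (bot_le) C hC (by simp) (hasEDC_zero _)
  | succ m ih =>
    intro G h
    by_cases hex : ∃ a b, G.Adj u a ∧ G.Adj u b ∧ G.Adj a b
    · obtain ⟨a, b, ha, hb, hab⟩ := hex
      let C : G.Walk u u := .cons ha (.cons hab (.cons hb.symm .nil))
      have hCe : C.edges = [s(u, a), s(a, b), s(b, u)] := rfl
      have hC : C.IsCycle := by
        have h1 := ha.ne; have h2 := hb.ne; have h3 := hab.ne
        simp only [C, SimpleGraph.Walk.cons_isCycle_iff, SimpleGraph.Walk.cons_isPath_iff,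
          SimpleGraph.Walk.edges_cons, SimpleGraph.Walk.edges_nil, SimpleGraph.Walk.support_cons,
          SimpleGraph.Walk.support_nil, SimpleGraph.Walk.isPath_iff_eq_nil]
        simp
        grind
      have hn : ¬ HasEDC (G.deleteEdges {e | e ∈ C.edges}) (m + 1) := by
        intro h'
        exact h (hasEDC_succ (G.deleteEdges_le _) C hC (by intro e he; simp [he]) h')
      obtain ⟨S, hS, hcov⟩ := ih _ hn
      refine ⟨insert a (insert b S), ?_, ?_⟩
      · have h1 := Finset.card_insert_le a (insert b S)
        have h2 := Finset.card_insert_le b S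
        omega
      · intro a' b' ha' hb' hab'
        by_contra hcon
        simp only [Finset.mem_insert, not_or] at hcon
        have h1 := ha.ne; have h2 := hb.ne; have h3 := hab.ne
        have h1' := ha'.ne; have h2' := hb'.ne; have h3' := hab'.ne
        have := hcov a' b' (by
            simp only [SimpleGraph.deleteEdges_adj, hCe]; refine ⟨ha', ?_⟩; simp; grind) (by
            simp only [SimpleGraph.deleteEdges_adj, hCe]; refine ⟨hb', ?_⟩; simp; grind) (by
            simp only [SimpleGraph.deleteEdges_adj, hCe]; refine ⟨hab', ?_⟩; simp; grind)
        tauto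
    · push Not at hex
      exact ⟨∅, by simp, fun a b ha hb hab => (hex a b ha hb hab).elim⟩

lemma cycle_row {V : Type*} [Fintype V] {G : SimpleGraph V} {v : V} (C : G.Walk v v) (hC : C.IsCycle)
    (a : V) : ∑ b, (if s(a, b) ∈ C.edges then (1 : ℝ) else 0) ≤ 2 := by
  rw [← Finset.sum_filter, Finset.sum_const, nsmul_eq_mul, mul_one]
  have h : ((Finset.univ.filter fun b => s(a, b) ∈ C.edges : Finset V) : Set V) =
      C.toSubgraph.neighborSet a := by
    ext b; simp [SimpleGraph.Walk.adj_toSubgraph_iff_mem_edges]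
  have h2 : (Finset.univ.filter fun b => s(a, b) ∈ C.edges).card ≤ 2 := by
    rw [← Set.ncard_coe_finset, h]
    by_cases ha : a ∈ C.support
    · rw [hC.ncard_neighborSet_toSubgraph_eq_two ha]
    · have : C.toSubgraph.neighborSet a = ∅ := by
        ext b
        simp only [SimpleGraph.Subgraph.mem_neighborSet, Set.mem_empty_iff_false, iff_false]
        intro hb
        rw [SimpleGraph.Walk.adj_toSubgraph_iff_mem_edges] at hb
        exact ha (C.fst_mem_support_of_mem_edges hb)
      simp [this]
  exact_mod_cast h2

lemma forest_decomp {V : Type*} [Fintype V] (m : ℕ) : ∀ (G : SimpleGraph V),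
    ¬ HasEDC G (m + 1) → ∃ F : SimpleGraph V, F ≤ G ∧ F.IsAcyclic ∧
      ∀ x : V → ℝ, qf G x ≤ qf F x + 2 * m * ∑ v, x v ^ 2 := by
  have acyc : ∀ (m : ℕ) (G : SimpleGraph V), G.IsAcyclic → ∃ F : SimpleGraph V, F ≤ G ∧ F.IsAcyclic ∧
      ∀ x : V → ℝ, qf G x ≤ qf F x + 2 * m * ∑ v, x v ^ 2 := by
    intro m G h
    refine ⟨G, le_rfl, h, fun x => ?_⟩
    have : 0 ≤ ∑ v, x v ^ 2 := Finset.sum_nonneg fun i _ => sq_nonneg _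
    have : 0 ≤ 2 * (m : ℝ) * ∑ v, x v ^ 2 := by positivity
    linarith
  induction m with
  | zero =>
    intro G h
    apply acyc
    intro v C hC
    exact h (hasEDC_succ (bot_le) C hC (by simp) (hasEDC_zero _))
  | succ m ih =>
    intro G h
    by_cases hG : G.IsAcyclic
    · exact acyc _ _ hG
    · unfold SimpleGraph.IsAcyclic at hG
      push Not at hG
      obtain ⟨v, C, hC⟩ := hG
      have hn : ¬ HasEDC (G.deleteEdges {e | e ∈ C.edges}) (m + 1) := by
        intro h'
        exact h (hasEDC_succ (G.deleteEdges_le _) C hC (by intro e he; simp [he]) h')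
      obtain ⟨F, hF, hFa, hFq⟩ := ih _ hn
      refine ⟨F, hF.trans (G.deleteEdges_le _), hFa, fun x => ?_⟩
      have h1 := hFq x
      have h2 : qf G x = qf (G.deleteEdges {e | e ∈ C.edges}) x +
          ∑ a, ∑ b, (if s(a, b) ∈ C.edges then (1 : ℝ) else 0) * (x a * x b) := by
        unfold qf
        rw [← Finset.sum_add_distrib]
        refine Finset.sum_congr rfl fun a _ => ?_
        rw [← Finset.sum_add_distrib]
        refine Finset.sum_congr rfl fun b _ => ?_
        rw [← add_mul]
        congr 1
        by_cases hm : s(a, b) ∈ C.edges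
        · have : G.Adj a b := C.edges_subset_edgeSet hm
          rw [av_of this, av_not (by simp [hm]), if_pos hm]; norm_num
        · rw [if_neg hm, add_zero]
          simp only [av, SimpleGraph.deleteEdges_adj]
          simp [hm]
      have h3 : ∑ a, ∑ b, (if s(a, b) ∈ C.edges then (1 : ℝ) else 0) * (x a * x b) ≤
          2 * ∑ v, x v ^ 2 := by
        have e1 : ∑ a, ∑ b, (if s(a, b) ∈ C.edges then (1 : ℝ) else 0) * (x a * x b) ≤
            ∑ a, ∑ b, ((if s(a, b) ∈ C.edges then (1 : ℝ) else 0) * (x a ^ 2 / 2) +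
              (if s(a, b) ∈ C.edges then (1 : ℝ) else 0) * (x b ^ 2 / 2)) := by
          refine Finset.sum_le_sum fun a _ => Finset.sum_le_sum fun b _ => ?_
          split_ifs
          · nlinarith [sq_nonneg (x a - x b)]
          · simp
        have e2 : ∑ a, ∑ b, (if s(a, b) ∈ C.edges then (1 : ℝ) else 0) * (x a ^ 2 / 2) ≤ ∑ v, x v ^ 2 := by
          refine Finset.sum_le_sum fun a _ => ?_
          rw [← Finset.sum_mul]
          have := mul_le_mul_of_nonneg_right (cycle_row C hC a) (show 0 ≤ x a ^ 2 / 2 by positivity)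
          linarith
        have e3 : ∑ a, ∑ b, (if s(a, b) ∈ C.edges then (1 : ℝ) else 0) * (x b ^ 2 / 2) ≤ ∑ v, x v ^ 2 := by
          rw [Finset.sum_comm]
          simp only [Sym2.eq_swap (a := _) (b := _)]
          refine le_trans (le_of_eq ?_) e2
          refine Finset.sum_congr rfl fun a _ => Finset.sum_congr rfl fun b _ => ?_
          rw [Sym2.eq_swap]
        simp only [Finset.sum_add_distrib] at e1
        linarith
      push_cast
      linarith

/-- make all vertices in `W` pendant at `u` -/
def pend {V : Type*} (G : SimpleGraph V) (u : V) (W : Set V) (hu : u ∉ W) : SimpleGraph V where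
  Adj a b := (G.Adj a b ∧ a ∉ W ∧ b ∉ W) ∨ (a = u ∧ b ∈ W) ∨ (b = u ∧ a ∈ W)
  symm := ⟨by rintro a b (⟨h, h1, h2⟩ | h | h); exacts [Or.inl ⟨h.symm, h2, h1⟩, Or.inr (Or.inr h), Or.inr (Or.inl h)]⟩
  loopless := ⟨by
    rintro a (⟨h, -⟩ | ⟨rfl, h⟩ | ⟨rfl, h⟩)
    · exact h.ne rfl
    · exact hu h
    · exact hu h⟩

lemma pend_edges {V : Type*} [Fintype V] (G : SimpleGraph V) (u : V) (W : Set V) (hu : u ∉ W) {v : V}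
    (C : (pend G u W hu).Walk v v) (hC : C.IsCycle) : ∀ e ∈ C.edges, e ∈ G.edgeSet := by
  have hW : ∀ w ∈ W, w ∉ C.support := by
    intro w hw hs
    have h2 := hC.ncard_neighborSet_toSubgraph_eq_two hs
    have h3 : C.toSubgraph.neighborSet w ⊆ {u} := by
      intro z hz
      have := C.toSubgraph.adj_sub hz
      rcases this with ⟨_, h, _⟩ | ⟨rfl, _⟩ | ⟨h, _⟩
      · exact (h hw).elim
      · exact (hu hw).elim
      · exact h
    have h4 := Set.ncard_le_ncard h3 (Set.toFinite _)
    rw [h2, Set.ncard_singleton] at h4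
    omega
  intro e
  induction e with
  | _ a b =>
    intro he
    have ha := C.fst_mem_support_of_mem_edges he
    have hb := C.snd_mem_support_of_mem_edges he
    have := C.edges_subset_edgeSet he
    rcases this with ⟨h, _⟩ | ⟨_, h⟩ | ⟨_, h⟩
    · exact h
    · exact (hW _ h hb).elim
    · exact (hW _ h ha).elim

lemma pend_hasEDC {V : Type*} [Fintype V] (G : SimpleGraph V) (u : V) (W : Set V) (hu : u ∉ W) {m : ℕ}
    (h : HasEDC (pend G u W hu) m) : HasEDC G m := by
  obtain ⟨c, hc, hdis⟩ := h
  refine ⟨fun i => ⟨(c i).1, (c i).2.transfer G (pend_edges G u W hu _ (hc i))⟩, ?_, ?_⟩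
  · intro i; exact (hc i).transfer _
  · intro i j hij
    simp only [SimpleGraph.Walk.edges_transfer]
    exact hdis i j hij

lemma bot_hasEDC {V : Type*} {m : ℕ} (h : HasEDC (⊥ : SimpleGraph V) m) : m = 0 := by
  obtain ⟨c, hc, _⟩ := h
  rcases m with _ | m
  · rfl
  · obtain ⟨e, he⟩ := cycle_edge _ (hc 0)
    have := (c 0).2.edges_subset_edgeSet he
    simp at this

lemma acyc_codeg {V : Type*} {F : SimpleGraph V} (hF : F.IsAcyclic) {u w a b : V} (huw : u ≠ w)
    (h1 : F.Adj u a) (h2 : F.Adj a w) (h3 : F.Adj u b) (h4 : F.Adj b w) : a = b := by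
  have p1 : (SimpleGraph.Walk.cons h1 (.cons h2 .nil)).IsPath := by
    simp [SimpleGraph.Walk.cons_isPath_iff, huw, h1.ne, h2.ne]
  have p2 : (SimpleGraph.Walk.cons h3 (.cons h4 .nil)).IsPath := by
    simp [SimpleGraph.Walk.cons_isPath_iff, huw, h3.ne, h4.ne]
  have := congrArg (fun p => p.1.support) (hF.path_unique ⟨_, p1⟩ ⟨_, p2⟩)
  simpa using this

lemma acyc_tri {V : Type*} {F : SimpleGraph V} (hF : F.IsAcyclic) {u a w : V}
    (h1 : F.Adj u a) (h2 : F.Adj a w) (h3 : F.Adj u w) : False := by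
  have p1 : (SimpleGraph.Walk.cons h1 (.cons h2 .nil)).IsPath := by
    simp [SimpleGraph.Walk.cons_isPath_iff, h3.ne, h1.ne, h2.ne]
  have p2 : (SimpleGraph.Walk.cons h3 .nil).IsPath := by
    simp [SimpleGraph.Walk.cons_isPath_iff, h3.ne]
  have := congrArg (fun p => p.1.length) (hF.path_unique ⟨_, p1⟩ ⟨_, p2⟩)
  simp at this

lemma sum_av {V : Type*} [Fintype V] (G : SimpleGraph V) : ∑ a, ∑ b, av G a b = 2 * (ecard G : ℝ) := by
  have h := G.sum_degrees_eq_twice_card_edges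
  have h2 : ecard G = G.edgeFinset.card := by
    unfold ecard
    rw [Nat.card_eq_fintype_card, ← SimpleGraph.edgeFinset_card]
  rw [h2]
  have h3 : ∀ a, ∑ b, av G a b = (G.degree a : ℝ) := by
    intro a
    unfold av
    rw [← Finset.sum_filter, Finset.sum_const, nsmul_eq_mul, mul_one]
    congr 1
    rw [← SimpleGraph.card_neighborFinset_eq_degree]
    congr 1
    ext b; simp
  simp only [h3]
  exact_mod_cast h

lemma acyc_edges {V : Type*} [Fintype V] [Nonempty V] {F : SimpleGraph V} (hF : F.IsAcyclic) :
    ∑ a, ∑ b, av F a b ≤ 2 * ((Fintype.card V : ℝ) - 1) := by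
  obtain ⟨T, hFT, hT⟩ := SimpleGraph.exists_maximal_isAcyclic_of_le_isAcyclic (le_top (a := F)) hF
  rw [SimpleGraph.connected_top.maximal_le_isAcyclic_iff_isTree le_top] at hT
  have h1 := (SimpleGraph.isTree_iff_connected_and_card.1 hT).2
  rw [Nat.card_eq_fintype_card (α := V)] at h1
  have h2 : ∑ a, ∑ b, av F a b ≤ ∑ a, ∑ b, av T a b := by
    refine Finset.sum_le_sum fun a _ => Finset.sum_le_sum fun b _ => ?_
    by_cases h : F.Adj a b
    · rw [av_of h, av_of (hFT h)]
    · rw [av_not h]; exact av_nonneg _ _ _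
  have h3 : (ecard T : ℝ) + 1 = Fintype.card V := by unfold ecard; exact_mod_cast h1
  rw [sum_av T] at h2
  linarith

/-- neighbours -/
noncomputable def nb {V : Type*} [Fintype V] (G : SimpleGraph V) (u : V) : Finset V :=
  Finset.univ.filter fun v => G.Adj u v

/-- non-neighbours -/
noncomputable def nw {V : Type*} [Fintype V] (G : SimpleGraph V) (u : V) : Finset V :=
  Finset.univ.filter fun v => v ≠ u ∧ ¬ G.Adj u v

lemma mem_nb {V : Type*} [Fintype V] {G : SimpleGraph V} {u v : V} : v ∈ nb G u ↔ G.Adj u v := by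
  simp [nb]

lemma mem_nw {V : Type*} [Fintype V] {G : SimpleGraph V} {u v : V} :
    v ∈ nw G u ↔ v ≠ u ∧ ¬ G.Adj u v := by
  simp [nw]

lemma sum_split {V : Type*} [Fintype V] (G : SimpleGraph V) (u : V) (f : V → ℝ) :
    ∑ v, f v = f u + ∑ v ∈ nb G u, f v + ∑ v ∈ nw G u, f v := by
  have h1 : ∑ v ∈ nb G u, f v = ∑ v, if G.Adj u v then f v else 0 := by
    unfold nb; rw [Finset.sum_filter]
  have h2 : ∑ v ∈ nw G u, f v = ∑ v, if v ≠ u ∧ ¬ G.Adj u v then f v else 0 := by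
    unfold nw; rw [Finset.sum_filter]
  have h3 : f u = ∑ v, if v = u then f v else 0 := by simp
  rw [h1, h2, h3, ← Finset.sum_add_distrib, ← Finset.sum_add_distrib]
  refine Finset.sum_congr rfl fun v _ => ?_
  by_cases hv : v = u
  · subst hv; simp
  · by_cases ha : G.Adj u v <;> simp [hv, ha]

lemma sum_av_nb {V : Type*} [Fintype V] (G : SimpleGraph V) (u : V) (f : V → ℝ) :
    ∑ v, av G u v * f v = ∑ v ∈ nb G u, f v := by
  unfold nb av; rw [Finset.sum_filter]; simp

lemma card_split {V : Type*} [Fintype V] (G : SimpleGraph V) (u : V) :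
    (Fintype.card V : ℝ) = 1 + (nb G u).card + (nw G u).card := by
  have := sum_split G u (fun _ => 1)
  simpa using this

lemma forest_star {V : Type*} [Fintype V] [Nonempty V] {F : SimpleGraph V} (hF : F.IsAcyclic)
    (u : V) (y : V → ℝ) (l : ℝ) (hl : 0 < l) (hy0 : ∀ v, 0 ≤ y v) (hy1 : ∀ v, y v ≤ 1) (hyu : y u = 1)
    (he : ∀ v, ∑ z, av F v z * y z = l * y v)
    (hs : l + 4 * ((Fintype.card V : ℝ) - 1 - l ^ 2) ≤ l ^ 2 / 3) :
    ((nw F u).card : ℝ) ≤ 3 / 2 * ((Fintype.card V : ℝ) - 1 - l ^ 2) := by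
  set n : ℝ := (Fintype.card V : ℝ) with hn
  set N := nb F u with hN
  set W := nw F u with hW
  set d : ℝ := (N.card : ℝ) with hd
  set s : ℝ := (W.card : ℝ) with hss
  have hcard : n = 1 + d + s := card_split F u
  set c : V → ℝ := fun w => ∑ v ∈ N, av F v w with hc
  have hc0 : ∀ w, 0 ≤ c w := fun w => Finset.sum_nonneg fun v _ => av_nonneg _ _ _
  have hcu : c u = d := by
    simp only [hc]
    rw [Finset.sum_congr rfl (fun v hv => av_of (mem_nb.1 hv).symm), Finset.sum_const,
      nsmul_eq_mul, mul_one]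
  have hcN : ∀ w ∈ N, c w = 0 := by
    intro w hw
    refine Finset.sum_eq_zero fun v hv => av_not fun h => ?_
    exact acyc_tri hF (mem_nb.1 hv) h (mem_nb.1 hw)
  have hcW : ∀ w ∈ W, c w ≤ 1 := by
    intro w hw
    by_cases hex : ∃ v ∈ N, F.Adj v w
    · obtain ⟨v, hv, hvw⟩ := hex
      simp only [hc]
      rw [Finset.sum_eq_single v]
      · exact av_le_one _ _ _
      · intro b hb hbv
        refine av_not fun h => hbv ?_
        exact acyc_codeg hF (mem_nw.1 hw).1.symm (mem_nb.1 hb) h (mem_nb.1 hv) hvw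
      · intro h; exact (h hv).elim
    · push Not at hex
      simp only [hc]
      rw [Finset.sum_eq_zero fun v hv => av_not (hex v hv)]
      norm_num
  have hl1 : l = ∑ v ∈ N, y v := by
    have := he u
    rw [sum_av_nb, hyu] at this
    linarith
  have swapN : ∀ f : V → ℝ, ∑ v ∈ N, ∑ w, av F v w * f w = d * f u + ∑ w ∈ W, c w * f w := by
    intro f
    rw [Finset.sum_comm]
    have : ∀ w, ∑ v ∈ N, av F v w * f w = c w * f w := by
      intro w; rw [← Finset.sum_mul]
    simp only [this]
    rw [sum_split F u, hcu, Finset.sum_eq_zero (s := nb F u)]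
    · ring
    · intro w hw; rw [hcN w hw, zero_mul]
  have hl2 : l ^ 2 = d + ∑ w ∈ W, c w * y w := by
    have := swapN y
    simp only [he] at this
    rw [← Finset.mul_sum, ← hl1, hyu] at this
    linarith
  set m := ∑ w ∈ W, c w with hm
  set D := ∑ v ∈ W, ∑ b ∈ W, av F v b with hD
  have hdeg : ∀ v ∈ W, ∑ b, av F v b = c v + ∑ b ∈ W, av F v b := by
    intro v hv
    rw [sum_split F u, av_not (fun h => (mem_nw.1 hv).2 h.symm), zero_add]
    congr 1
    simp only [hc]
    exact Finset.sum_congr rfl fun b _ => av_symm _ _ _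
  have htot : 2 * d + 2 * m + D ≤ 2 * (n - 1) := by
    have h1 := acyc_edges hF
    rw [sum_split F u] at h1
    have e1 : ∑ b, av F u b = d := by
      have := sum_av_nb F u (fun _ => 1)
      simp at this
      exact this
    have e2 : ∑ v ∈ N, ∑ w, av F v w = d + m := by
      have := swapN (fun _ => 1)
      simpa using this
    have e3 : ∑ v ∈ W, ∑ w, av F v w = m + D := by
      rw [Finset.sum_congr rfl hdeg, Finset.sum_add_distrib]
    rw [e1, e2, e3] at h1
    linarith
  have hm1 : l ^ 2 ≤ d + m := by
    rw [hl2]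
    have : ∑ w ∈ W, c w * y w ≤ m :=
      Finset.sum_le_sum fun w _ => mul_le_of_le_one_right (hc0 w) (hy1 w)
    linarith
  have hDT : D ≤ 2 * (n - 1 - l ^ 2) := by linarith
  have hyW : ∀ w ∈ W, y w ≤ 1 / 3 := by
    intro w hw
    have h1 : l ^ 2 * y w = ∑ v, av F w v * (l * y v) := by
      have e : ∀ v, av F w v * (l * y v) = l * (av F w v * y v) := fun v => by ring
      simp only [e]
      rw [← Finset.mul_sum, he w]; ring
    rw [sum_split F u, av_not (fun h => (mem_nw.1 hw).2 h.symm), zero_mul, zero_add] at h1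
    have h2 : ∑ v ∈ nb F u, av F w v * (l * y v) ≤ l := by
      calc ∑ v ∈ nb F u, av F w v * (l * y v) ≤ ∑ v ∈ N, av F v w * l := by
            refine Finset.sum_le_sum fun v _ => ?_
            rw [av_symm F w v]
            refine mul_le_mul_of_nonneg_left ?_ (av_nonneg _ _ _)
            nlinarith [hy1 v]
        _ = c w * l := by rw [← Finset.sum_mul]
        _ ≤ 1 * l := mul_le_mul_of_nonneg_right (hcW w hw) hl.le
        _ = l := one_mul l
    have h3 : ∑ v ∈ nw F u, av F w v * (l * y v) ≤ 2 * D := by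
      rw [hD, Finset.mul_sum]
      refine Finset.sum_le_sum fun v hv => ?_
      have hnn : 0 ≤ ∑ b ∈ W, av F v b := Finset.sum_nonneg fun b _ => av_nonneg _ _ _
      by_cases hwv : F.Adj w v
      · rw [av_of hwv, one_mul, ← he v]
        have e1 : ∑ z, av F v z * y z ≤ ∑ z, av F v z :=
          Finset.sum_le_sum fun z _ => mul_le_of_le_one_right (av_nonneg _ _ _) (hy1 z)
        rw [hdeg v hv] at e1
        have e2 : (1 : ℝ) ≤ ∑ b ∈ W, av F v b := by
          have := Finset.single_le_sum (f := fun b => av F v b) (fun b _ => av_nonneg F v b) hw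
          rw [av_of hwv.symm] at this
          exact this
        have e3 := hcW v hv
        linarith
      · rw [av_not hwv, zero_mul]; linarith
    have h4 : l ^ 2 * y w ≤ l ^ 2 * (1 / 3) := by linarith
    exact le_of_mul_le_mul_left h4 (by positivity)
  have hfin : ∑ w ∈ W, c w * y w ≤ s * (1 / 3) := by
    calc ∑ w ∈ W, c w * y w ≤ ∑ w ∈ W, (1 : ℝ) / 3 := by
          refine Finset.sum_le_sum fun w hw => ?_
          calc c w * y w ≤ 1 * y w := mul_le_mul_of_nonneg_right (hcW w hw) (hy0 w)
            _ ≤ 1 / 3 := by rw [one_mul]; exact hyW w hw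
      _ = s * (1 / 3) := by simp [hss]
  linarith

lemma hK_of {V : Type*} [Fintype V] {G : SimpleGraph V} {k : ℕ} (hk : 1 ≤ k) (hG : ¬ HasEDC G k)
    (a b : V) (hab : a ≠ b) : ∑ v, av G a v * av G v b ≤ 2 * (k : ℝ) - 1 := by
  have h1 : ∑ v, av G a v * av G v b = ((cn G a b).card : ℝ) := by
    have : ∀ v, av G a v * av G v b = if G.Adj a v ∧ G.Adj b v then 1 else 0 := by
      intro v
      rw [av_symm G v b]
      unfold av
      by_cases h1 : G.Adj a v <;> by_cases h2 : G.Adj b v <;> simp [h1, h2]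
    simp only [this]
    rw [← Finset.sum_filter]
    simp [cn]
  have h2 : (cn G a b).card < 2 * k := by
    by_contra h
    exact hG (hasEDC_of_codeg k G a b hab (by omega))
  have h3 : ((cn G a b).card : ℝ) + 1 ≤ 2 * k := by exact_mod_cast h2
  rw [h1]; linarith

lemma sum_erase {V : Type*} [Fintype V] (u : V) (f : V → ℝ) :
    ∑ v, f v = f u + ∑ v ∈ Finset.univ.erase u, f v :=
  (Finset.add_sum_erase _ _ (Finset.mem_univ u)).symm

lemma M_bound {V : Type*} [Fintype V] {G : SimpleGraph V} {K : ℝ} (hK0 : 0 ≤ K)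
    (hK : ∀ a b, a ≠ b → ∑ v, av G a v * av G v b ≤ K) (u : V) (x : V → ℝ) (ρ : ℝ) (hρ : 0 ≤ ρ)
    (hx0 : ∀ v, 0 ≤ x v) (he : ∀ v, ∑ z, av G v z * x z = ρ * x v)
    (w : V) (hw : w ≠ u) (hM : ∀ v, v ≠ u → x v ≤ x w) :
    ρ ^ 2 * x w ≤ (ρ + K) * x u + (K * (K + 1) + (nw G u).card * (2 * K + 1)) * x w := by
  set M := x w with hMd
  have hM0 : 0 ≤ M := hx0 w
  set s : ℝ := ((nw G u).card : ℝ) with hs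
  set E : Finset V := Finset.univ.erase u with hE
  have hEle : ∀ f : V → ℝ, (∀ v, 0 ≤ f v) → ∑ v ∈ E, f v ≤ ∑ v, f v := fun f hf =>
    Finset.sum_le_sum_of_subset_of_nonneg (Finset.subset_univ _) (fun v _ _ => hf v)
  have hEs : ∀ f : V → ℝ, ∑ v ∈ E, f v = ∑ v ∈ nb G u, f v + ∑ v ∈ nw G u, f v := by
    intro f
    have h1 := sum_erase u f
    have h2 := sum_split G u f
    linarith
  have hNb : ∀ v, v ≠ u → ∑ z ∈ nb G u, av G v z ≤ K := by
    intro v hv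
    rw [← sum_av_nb]
    refine le_trans (le_of_eq ?_) (hK u v hv.symm)
    exact Finset.sum_congr rfl fun z _ => by rw [av_symm G v z]
  set dH : V → ℝ := fun v => ∑ z ∈ E, av G v z with hdH
  have hd0 : ∀ v, 0 ≤ dH v := fun v => Finset.sum_nonneg fun z _ => av_nonneg _ _ _
  have hNw : ∀ v, ∑ z ∈ nw G u, av G v z ≤ s := by
    intro v
    calc ∑ z ∈ nw G u, av G v z ≤ ∑ z ∈ nw G u, (1 : ℝ) := Finset.sum_le_sum fun z _ => av_le_one _ _ _
      _ = s := by simp [hs]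
  have hd1 : ∀ v, v ≠ u → dH v ≤ K + s := by
    intro v hv
    simp only [hdH]; rw [hEs]
    linarith [hNb v hv, hNw v]
  have hrow : ∀ v, ρ * x v ≤ av G v u * x u + M * dH v := by
    intro v
    rw [← he v, sum_erase u]
    have : ∑ z ∈ E, av G v z * x z ≤ M * dH v := by
      simp only [hdH]; rw [Finset.mul_sum]
      refine Finset.sum_le_sum fun z hz => ?_
      rw [mul_comm]
      exact mul_le_mul_of_nonneg_right (hM z (Finset.ne_of_mem_erase hz)) (av_nonneg _ _ _)
    linarith
  have h1 : ρ ^ 2 * x w = ρ * (av G w u * x u) + ∑ v ∈ E, av G w v * (ρ * x v) := by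
    have e : ∑ v, av G w v * (ρ * x v) = ρ ^ 2 * x w := by
      have e : ∀ v, av G w v * (ρ * x v) = ρ * (av G w v * x v) := fun v => by ring
      simp only [e]
      rw [← Finset.mul_sum, he w]; ring
    rw [← e, sum_erase u]; ring
  have h2 : ∑ v ∈ E, av G w v * (ρ * x v) ≤
      (∑ v ∈ E, av G w v * av G v u) * x u + M * ∑ v ∈ E, av G w v * dH v := by
    rw [Finset.sum_mul, Finset.mul_sum, ← Finset.sum_add_distrib]
    refine Finset.sum_le_sum fun v _ => ?_
    have := mul_le_mul_of_nonneg_left (hrow v) (av_nonneg G w v)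
    linarith
  have h3 : ∑ v ∈ E, av G w v * av G v u ≤ K :=
    (hEle _ fun v => mul_nonneg (av_nonneg _ _ _) (av_nonneg _ _ _)).trans (hK w u hw)
  have h4 : ∑ v ∈ E, av G w v * dH v ≤ K * (K + 1) + s * (2 * K + 1) := by
    have e1 : ∑ v ∈ E, av G w v * dH v ≤ ∑ v ∈ E, av G w v * K +
        ∑ v ∈ E, av G w v * ∑ z ∈ nw G u, av G v z := by
      rw [← Finset.sum_add_distrib]
      refine Finset.sum_le_sum fun v hv => ?_
      rw [← mul_add]
      refine mul_le_mul_of_nonneg_left ?_ (av_nonneg _ _ _)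
      simp only [hdH]; rw [hEs]
      linarith [hNb v (Finset.ne_of_mem_erase hv)]
    have e2 : ∑ v ∈ E, av G w v * K = K * dH w := by
      rw [← Finset.sum_mul, mul_comm]
    have e3 : ∑ v ∈ E, av G w v * ∑ z ∈ nw G u, av G v z ≤ s * K + dH w := by
      simp only [Finset.mul_sum]
      rw [Finset.sum_comm]
      calc ∑ z ∈ nw G u, ∑ v ∈ E, av G w v * av G v z
          ≤ ∑ z ∈ nw G u, (K + if z = w then dH w else 0) := by
            refine Finset.sum_le_sum fun z _ => ?_
            by_cases hz : z = w
            · rw [if_pos hz]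
              have : ∑ v ∈ E, av G w v * av G v z ≤ dH w :=
                Finset.sum_le_sum fun v _ => mul_le_of_le_one_right (av_nonneg _ _ _) (av_le_one _ _ _)
              linarith
            · rw [if_neg hz, add_zero]
              exact (hEle _ fun v => mul_nonneg (av_nonneg _ _ _) (av_nonneg _ _ _)).trans
                (hK w z (Ne.symm hz))
        _ ≤ s * K + dH w := by
            rw [Finset.sum_add_distrib]
            have : ∑ z ∈ nw G u, (if z = w then dH w else 0) ≤ dH w := by
              rw [Finset.sum_ite_eq']
              split_ifs
              · exact le_rfl
              · exact hd0 w
            simp only [Finset.sum_const, nsmul_eq_mul]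
            linarith
    have e4 := hd1 w hw
    nlinarith
  have h5 : ρ * (av G w u * x u) ≤ ρ * x u :=
    mul_le_mul_of_nonneg_left (mul_le_of_le_one_left (hx0 u) (av_le_one _ _ _)) hρ
  have h6 := mul_le_mul_of_nonneg_right h3 (hx0 u)
  have h7 := mul_le_mul_of_nonneg_left h4 hM0
  rw [h1]
  linarith

lemma pend_step {V : Type*} [Fintype V] {G : SimpleGraph V} {K : ℝ}
    (hK : ∀ a b, a ≠ b → ∑ v, av G a v * av G v b ≤ K) (u : V) (x : V → ℝ) (ρ : ℝ) (hρ : 0 < ρ)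
    (hx0 : ∀ v, 0 ≤ x v) (hxu : x u = 1) (he : ∀ v, ∑ z, av G v z * x z = ρ * x v)
    (M : ℝ) (hM0 : 0 ≤ M) (hM : ∀ v, v ≠ u → x v ≤ M) (hu : u ∉ (nw G u : Set V))
    (hray : ∀ y : V → ℝ, qf (pend G u (nw G u) hu) y ≤ ρ * ∑ v, y v ^ 2) :
    ((nw G u).card : ℝ) ≤ (nw G u).card * (ρ * K * M ^ 2) := by
  set s : ℝ := ((nw G u).card : ℝ) with hs
  set W := nw G u with hW
  have huW : u ∉ W := hu
  let z : V → ℝ := fun v => if v ∈ W then 0 else x v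
  have hz0 : ∀ v, 0 ≤ z v := by intro v; simp only [z]; split_ifs; exacts [le_rfl, hx0 v]
  have hcount : ∀ c : ℝ, ∑ b, (if b ∈ W then c else 0) = s * c := by
    intro c; simp [hs]
  have h1 := hray (fun v => if v ∈ W then 1 / ρ else x v)
  have e1 : qf (pend G u W hu) (fun v => if v ∈ W then 1 / ρ else x v) = qf G z + 2 * (s * (1 / ρ)) := by
    unfold qf
    have : ∀ a b, av (pend G u W hu) a b * ((if a ∈ W then 1 / ρ else x a) * (if b ∈ W then 1 / ρ else x b))
        = av G a b * (z a * z b) + (if a = u then (if b ∈ W then 1 / ρ else 0) else 0)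
          + (if b = u then (if a ∈ W then 1 / ρ else 0) else 0) := by
      intro a b
      have hadj : (pend G u W hu).Adj a b ↔ (G.Adj a b ∧ a ∉ W ∧ b ∉ W) ∨ (a = u ∧ b ∈ W) ∨ (b = u ∧ a ∈ W) :=
        Iff.rfl
      unfold av
      simp only [hadj, z]
      by_cases ha : a ∈ W <;> by_cases hb : b ∈ W
      · have h1 : a ≠ u := fun h => huW (h ▸ ha)
        have h2 : b ≠ u := fun h => huW (h ▸ hb)
        simp [ha, hb, h1, h2]
      · have h1 : a ≠ u := fun h => huW (h ▸ ha)
        by_cases h2 : b = u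
        · subst h2; simp [ha, hb, h1, hxu]
        · simp [ha, hb, h1, h2]
      · have h2 : b ≠ u := fun h => huW (h ▸ hb)
        by_cases h1 : a = u
        · subst h1; simp [ha, hb, h2, hxu]
        · simp [ha, hb, h1, h2]
      · simp [ha, hb]
    simp only [this, Finset.sum_add_distrib]
    have f1 : ∑ a, ∑ b, (if a = u then (if b ∈ W then 1 / ρ else 0) else 0) = s * (1 / ρ) := by
      rw [Finset.sum_comm]
      simp only [Finset.sum_ite_eq', Finset.mem_univ, if_true]
      exact hcount _
    have f2 : ∑ a, ∑ b, (if b = u then (if a ∈ W then 1 / ρ else 0) else 0) = s * (1 / ρ) := by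
      simp only [Finset.sum_ite_eq', Finset.mem_univ, if_true]
      exact hcount _
    rw [f1, f2]; ring
  have e2 : ∑ v, (if v ∈ W then 1 / ρ else x v) ^ 2 = ∑ v, z v ^ 2 + s * (1 / ρ) ^ 2 := by
    rw [← hcount, ← Finset.sum_add_distrib]
    refine Finset.sum_congr rfl fun v _ => ?_
    simp only [z]; split_ifs <;> ring
  have e3 : qf G z = ρ * ∑ v, z v ^ 2 - ∑ b ∈ W, x b * ∑ a, av G a b * z a := by
    have g1 : ∀ a, ∑ b, av G a b * z b = ρ * x a - ∑ b ∈ W, av G a b * x b := by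
      intro a
      rw [← he a, ← Finset.sum_filter_add_sum_filter_not Finset.univ (fun b => b ∈ W) (fun b => av G a b * x b)]
      simp only [Finset.filter_mem_eq_inter, Finset.univ_inter, add_sub_cancel_left]
      rw [Finset.sum_filter]
      refine Finset.sum_congr rfl fun b _ => ?_
      simp only [z]; split_ifs <;> simp_all
    have g2 : qf G z = ∑ a, z a * ∑ b, av G a b * z b := by
      unfold qf
      refine Finset.sum_congr rfl fun a _ => ?_
      rw [Finset.mul_sum]
      exact Finset.sum_congr rfl fun b _ => by ring
    rw [g2]
    simp only [g1, mul_sub, Finset.sum_sub_distrib]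
    congr 1
    · rw [Finset.mul_sum]
      refine Finset.sum_congr rfl fun a _ => ?_
      simp only [z]; split_ifs <;> ring
    · simp only [Finset.mul_sum]
      rw [Finset.sum_comm]
      exact Finset.sum_congr rfl fun b _ => Finset.sum_congr rfl fun a _ => by ring
  have e4 : ∑ b ∈ W, x b * ∑ a, av G a b * z a ≤ s * (M * (K * M)) := by
    have : ∑ b ∈ W, M * (K * M) = s * (M * (K * M)) := by simp [hs]
    rw [← this]
    refine Finset.sum_le_sum fun b hb => ?_
    have hbu := (mem_nw.1 hb)
    have g1 : ∑ a, av G a b * z a ≤ K * M := by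
      refine le_trans ?_ (mul_le_mul_of_nonneg_right (hK u b hbu.1.symm) hM0)
      rw [Finset.sum_mul]
      refine Finset.sum_le_sum fun a _ => ?_
      by_cases hau : a = u
      · subst hau; rw [av_not hbu.2]; simp
      · by_cases haN : G.Adj u a
        · rw [av_of haN, one_mul]
          refine mul_le_mul_of_nonneg_left ?_ (av_nonneg _ _ _)
          simp only [z]; split_ifs
          · exact hM0
          · exact hM a hau
        · have : a ∈ W := mem_nw.2 ⟨hau, haN⟩
          simp only [z, this, if_true, mul_zero]
          rw [av_not haN]; simp
    exact mul_le_mul (hM b hbu.1) g1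
      (Finset.sum_nonneg fun a _ => mul_nonneg (av_nonneg _ _ _) (hz0 a)) hM0
  rw [e1, e2, e3] at h1
  have h2 : s * (1 / ρ) ≤ s * (M * (K * M)) := by
    have : ρ * (s * (1 / ρ) ^ 2) = s * (1 / ρ) := by field_simp
    linarith
  have h3 := mul_le_mul_of_nonneg_left h2 hρ.le
  have h4 : ρ * (s * (1 / ρ)) = s := by field_simp
  linarith

lemma dom_lower {V : Type*} [Fintype V] {G : SimpleGraph V} (u : V) (hu : ∀ v, v ≠ u → G.Adj u v) (ρ : ℝ)
    (hray : ∀ y : V → ℝ, qf G y ≤ ρ * ∑ v, y v ^ 2) (t : ℝ) :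
    t ^ 2 * (2 * ecard G - 2 * ((Fintype.card V : ℝ) - 1)) + 2 * ((Fintype.card V : ℝ) - 1) * t ≤
      ρ * (1 + ((Fintype.card V : ℝ) - 1) * t ^ 2) := by
  have hdeg : ∑ b, av G u b = (Fintype.card V : ℝ) - 1 := by
    have : ∀ b, av G u b = 1 - (if b = u then 1 else 0) := by
      intro b
      by_cases h : b = u
      · subst h; simp [av_self]
      · rw [av_of (hu b h)]; simp [h]
    simp [this]
  have h1 := hray (fun v => t + (1 - t) * (if v = u then 1 else 0))
  have e1 : qf G (fun v => t + (1 - t) * (if v = u then 1 else 0)) =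
      t ^ 2 * (2 * ecard G) + 2 * (t * (1 - t) * ((Fintype.card V : ℝ) - 1)) := by
    unfold qf
    have : ∀ a b, av G a b * ((t + (1 - t) * (if a = u then 1 else 0)) * (t + (1 - t) * (if b = u then 1 else 0)))
        = t ^ 2 * av G a b + (if a = u then t * (1 - t) * av G u b else 0) +
          (if b = u then t * (1 - t) * av G u a else 0) := by
      intro a b
      by_cases ha : a = u <;> by_cases hb : b = u
      · subst ha; subst hb; simp [av_self]
      · subst ha; simp [hb]; ring
      · subst hb; simp [ha, av_symm G a b]; ring
      · simp [ha, hb]; ring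
    simp only [this, Finset.sum_add_distrib]
    have f1 : ∑ a, ∑ b, (if a = u then t * (1 - t) * av G u b else 0) =
        t * (1 - t) * ((Fintype.card V : ℝ) - 1) := by
      rw [Finset.sum_comm]
      simp only [Finset.sum_ite_eq', Finset.mem_univ, if_true]
      rw [← Finset.mul_sum, hdeg]
    have f2 : ∑ a, ∑ b, (if b = u then t * (1 - t) * av G u a else 0) =
        t * (1 - t) * ((Fintype.card V : ℝ) - 1) := by
      simp only [Finset.sum_ite_eq', Finset.mem_univ, if_true]
      rw [← Finset.mul_sum, hdeg]
    rw [f1, f2]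
    simp only [← Finset.mul_sum]
    rw [sum_av]; ring
  have e2 : ∑ v, (t + (1 - t) * (if v = u then 1 else 0)) ^ 2 = 1 + ((Fintype.card V : ℝ) - 1) * t ^ 2 := by
    have : ∀ v, (t + (1 - t) * (if v = u then (1 : ℝ) else 0)) ^ 2 = t ^ 2 + (if v = u then 1 - t ^ 2 else 0) := by
      intro v; split_ifs <;> ring
    simp only [this, Finset.sum_add_distrib]
    simp; ring
  rw [e1, e2] at h1
  linarith

lemma dom_EE {V : Type*} [Fintype V] {G : SimpleGraph V} (u : V) (hu : ∀ v, v ≠ u → G.Adj u v) :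
    ∑ a ∈ Finset.univ.erase u, ∑ b ∈ Finset.univ.erase u, av G a b =
      2 * ecard G - 2 * ((Fintype.card V : ℝ) - 1) := by
  have hc : ((Finset.univ.erase u).card : ℝ) = (Fintype.card V : ℝ) - 1 := by
    have h := sum_erase u (fun _ => 1)
    simp only [Finset.sum_const, nsmul_eq_mul, mul_one, Finset.card_univ] at h
    linarith
  have hA : ∑ b ∈ Finset.univ.erase u, av G u b = (Fintype.card V : ℝ) - 1 := by
    rw [← hc, Finset.sum_congr rfl (fun b hb => av_of (hu b (Finset.ne_of_mem_erase hb)))]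
    simp
  have hB : ∑ a ∈ Finset.univ.erase u, av G a u = (Fintype.card V : ℝ) - 1 := by
    rw [← hA]; exact Finset.sum_congr rfl fun b _ => av_symm _ _ _
  have h := sum_av G
  rw [sum_erase u, sum_erase u (fun b => av G u b), av_self, hA] at h
  have e : ∑ a ∈ Finset.univ.erase u, ∑ b, av G a b =
      ∑ a ∈ Finset.univ.erase u, av G a u + ∑ a ∈ Finset.univ.erase u, ∑ b ∈ Finset.univ.erase u, av G a b := by
    rw [← Finset.sum_add_distrib]
    exact Finset.sum_congr rfl fun a _ => sum_erase u _
  rw [e, hB] at h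
  linarith

lemma dom_deg {V : Type*} [Fintype V] {G : SimpleGraph V} {K : ℝ}
    (hK : ∀ a b, a ≠ b → ∑ v, av G a v * av G v b ≤ K) (u : V) (hu : ∀ v, v ≠ u → G.Adj u v)
    (w : V) (hw : w ≠ u) : ∑ b ∈ Finset.univ.erase u, av G w b ≤ K := by
  have h := hK u w hw.symm
  rw [sum_erase u, av_self, zero_mul, zero_add] at h
  refine le_trans (le_of_eq ?_) h
  refine Finset.sum_congr rfl fun b hb => ?_
  rw [av_of (hu b (Finset.ne_of_mem_erase hb)), one_mul, av_symm]

lemma dom_upper {V : Type*} [Fintype V] {G : SimpleGraph V} {K : ℝ}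
    (hK : ∀ a b, a ≠ b → ∑ v, av G a v * av G v b ≤ K) (u : V) (hu : ∀ v, v ≠ u → G.Adj u v)
    (x : V → ℝ) (ρ : ℝ) (hρK : K < ρ)
    (hx0 : ∀ v, 0 ≤ x v) (hxu : x u = 1) (he : ∀ v, ∑ z, av G v z * x z = ρ * x v)
    (hne : ∃ v, v ≠ u) :
    (ρ ^ 2 - ((Fintype.card V : ℝ) - 1)) * (ρ - K) ≤ 2 * ecard G - 2 * ((Fintype.card V : ℝ) - 1) := by
  set E : Finset V := Finset.univ.erase u with hE
  have hc : (E.card : ℝ) = (Fintype.card V : ℝ) - 1 := by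
    have h := sum_erase u (fun _ => 1)
    simp only [Finset.sum_const, nsmul_eq_mul, mul_one, Finset.card_univ] at h
    rw [hE]; linarith
  obtain ⟨v0, hv0⟩ := hne
  obtain ⟨w, hwE, hw⟩ := E.exists_max_image x ⟨v0, Finset.mem_erase.2 ⟨hv0, Finset.mem_univ _⟩⟩
  have hwu := Finset.ne_of_mem_erase hwE
  have hrow : ∀ v ∈ E, ρ * x v = 1 + ∑ z ∈ E, av G v z * x z := by
    intro v hv
    rw [← he v, sum_erase u, av_of (hu v (Finset.ne_of_mem_erase hv)).symm, hxu, one_mul]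
  have hM : x w * (ρ - K) ≤ 1 := by
    have h1 := hrow w hwE
    have h2 : ∑ z ∈ E, av G w z * x z ≤ K * x w := by
      refine le_trans ?_ (mul_le_mul_of_nonneg_right (dom_deg hK u hu w hwu) (hx0 w))
      rw [Finset.sum_mul]
      exact Finset.sum_le_sum fun z hz => mul_le_mul_of_nonneg_left (hw z hz) (av_nonneg _ _ _)
    linarith
  have hρ1 : ρ = ∑ v ∈ E, x v := by
    have h1 := he u
    rw [sum_erase u, av_self, hxu, zero_mul, zero_add, mul_one] at h1
    rw [← h1]
    refine Finset.sum_congr rfl fun v hv => ?_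
    rw [av_of (hu v (Finset.ne_of_mem_erase hv)), one_mul]
  have hρ2 : ρ ^ 2 = ((Fintype.card V : ℝ) - 1) + ∑ v ∈ E, ∑ z ∈ E, av G v z * x z := by
    have : ρ ^ 2 = ∑ v ∈ E, ρ * x v := by
      rw [← Finset.mul_sum, ← hρ1]; ring
    rw [this, Finset.sum_congr rfl hrow, Finset.sum_add_distrib]
    simp only [Finset.sum_const, nsmul_eq_mul, mul_one, hc]
  have h3 : ∑ v ∈ E, ∑ z ∈ E, av G v z * x z ≤ (2 * ecard G - 2 * ((Fintype.card V : ℝ) - 1)) * x w := by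
    rw [← dom_EE u hu, Finset.sum_mul]
    refine Finset.sum_le_sum fun v _ => ?_
    rw [Finset.sum_mul]
    exact Finset.sum_le_sum fun z hz => mul_le_mul_of_nonneg_left (hw z hz) (av_nonneg _ _ _)
  have hh : 0 ≤ 2 * (ecard G : ℝ) - 2 * ((Fintype.card V : ℝ) - 1) := by
    rw [← dom_EE u hu]
    exact Finset.sum_nonneg fun a _ => Finset.sum_nonneg fun b _ => av_nonneg _ _ _
  have h4 : ρ ^ 2 - ((Fintype.card V : ℝ) - 1) ≤ (2 * ecard G - 2 * ((Fintype.card V : ℝ) - 1)) * x w := by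
    linarith
  have h5 := mul_le_mul_of_nonneg_right h4 (sub_pos.2 hρK).le
  have h6 := mul_le_mul_of_nonneg_left hM hh
  linarith

lemma dom_edges {V : Type*} [Fintype V] {G : SimpleGraph V} {K : ℝ}
    (hK : ∀ a b, a ≠ b → ∑ v, av G a v * av G v b ≤ K) (hK0 : 0 ≤ K)
    (u : V) (hu : ∀ v, v ≠ u → G.Adj u v) (m : ℕ) (hG : ¬ HasEDC G (m + 1)) :
    2 * (ecard G : ℝ) - 2 * ((Fintype.card V : ℝ) - 1) ≤ 2 * (2 * m * K) := by
  obtain ⟨S, hS, hcov⟩ := cover u m G hG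
  rw [← dom_EE u hu]
  set E : Finset V := Finset.univ.erase u with hE
  have h1 : ∑ a ∈ E, ∑ b ∈ E, (if a ∈ S then av G a b else 0) ≤ 2 * m * K := by
    have : ∑ a ∈ E, ∑ b ∈ E, (if a ∈ S then av G a b else 0) ≤ ∑ a ∈ E, (if a ∈ S then K else 0) := by
      refine Finset.sum_le_sum fun a ha => ?_
      split_ifs
      · exact dom_deg hK u hu a (Finset.ne_of_mem_erase ha)
      · simp
    refine this.trans ?_
    have h2 : ∑ a ∈ E, (if a ∈ S then K else 0) ≤ ∑ a, (if a ∈ S then K else 0) :=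
      Finset.sum_le_sum_of_subset_of_nonneg (Finset.subset_univ _)
        (fun v _ _ => by split_ifs; exacts [hK0, le_rfl])
    refine h2.trans ?_
    have : ∑ a, (if a ∈ S then K else 0) = S.card * K := by simp
    rw [this]
    have h3 : (S.card : ℝ) ≤ 2 * m := by exact_mod_cast hS
    exact mul_le_mul_of_nonneg_right h3 hK0
  have h2 : ∑ a ∈ E, ∑ b ∈ E, (if b ∈ S then av G a b else 0) ≤ 2 * m * K := by
    rw [Finset.sum_comm]
    refine le_trans (le_of_eq ?_) h1
    refine Finset.sum_congr rfl fun a _ => Finset.sum_congr rfl fun b _ => ?_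
    rw [av_symm]
  have h3 : ∑ a ∈ E, ∑ b ∈ E, av G a b ≤ ∑ a ∈ E, ∑ b ∈ E, ((if a ∈ S then av G a b else 0) +
      (if b ∈ S then av G a b else 0)) := by
    refine Finset.sum_le_sum fun a ha => Finset.sum_le_sum fun b hb => ?_
    by_cases hab : G.Adj a b
    · have := hcov a b (hu a (Finset.ne_of_mem_erase ha)) (hu b (Finset.ne_of_mem_erase hb)) hab
      rw [av_of hab]
      rcases this with h | h
      · rw [if_pos h]; split_ifs <;> norm_num
      · rw [if_pos h]; split_ifs <;> norm_num
    · rw [av_not hab]; simp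
  simp only [Finset.sum_add_distrib] at h3
  linarith


lemma num_forest {k : ℕ} (hk : 1 ≤ k) {r l : ℝ} (hr : 8 * (k : ℝ) ^ 3 - 1 / 8 ≤ r)
    (hl : r - 2 * ((k : ℝ) - 1) ≤ l) : 0 < l ∧ l + 4 * (r ^ 2 - l ^ 2) ≤ l ^ 2 / 3 := by
  have h : 26 * (2 * ((k : ℝ) - 1)) + 3 ≤ r := by
    rcases Nat.lt_or_ge k 2 with h | h
    · have : k = 1 := by omega
      subst this; norm_num at hr ⊢; linarith
    · have h2 : (2 : ℝ) ≤ k := by exact_mod_cast h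
      nlinarith [mul_nonneg (sub_nonneg.2 h2) (sub_nonneg.2 h2),
        mul_nonneg (mul_nonneg (sub_nonneg.2 h2) (sub_nonneg.2 h2)) (sub_nonneg.2 h2)]
  have hk1 : (1 : ℝ) ≤ k := by exact_mod_cast hk
  set a := 2 * ((k : ℝ) - 1) with ha
  have ha0 : 0 ≤ a := by rw [ha]; linarith
  have hl0 : 3 ≤ l := by linarith
  refine ⟨by linarith, ?_⟩
  have h1 : (13 / 3) * (r - a) ^ 2 - (r - a) ≤ (13 / 3) * l ^ 2 - l := by
    nlinarith [mul_nonneg (sub_nonneg.2 hl) (by linarith : (0:ℝ) ≤ 13 / 3 * (l + (r - a)) - 1)]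
  have h2 : 0 ≤ r * (r - (26 * a + 3)) := mul_nonneg (by linarith) (by linarith)
  nlinarith [sq_nonneg a]

lemma num_P {k : ℕ} (hk : 2 ≤ k) {r s : ℝ} (hr : 8 * (k : ℝ) ^ 3 - 1 / 8 ≤ r)
    (hs : s ≤ 6 * ((k : ℝ) - 1) * r) :
    (2 * (k : ℝ) - 1) * (2 * (k : ℝ) - 1 + 1) + s * (2 * (2 * (k : ℝ) - 1) + 1) ≤ 2 / 3 * r ^ 2 := by
  have h2 : (2 : ℝ) ≤ k := by exact_mod_cast hk
  set q : ℝ := (k : ℝ) with hq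
  obtain ⟨t, ht⟩ : ∃ t, q = 2 + t := ⟨q - 2, by ring⟩
  have ht0 : 0 ≤ t := by linarith
  have hA : 6 * (4 * q - 1) * (q - 1) + 1 / 4 ≤ 2 / 3 * r := by
    have : 6 * (4 * q - 1) * (q - 1) + 1 / 4 ≤ 2 / 3 * (8 * q ^ 3 - 1 / 8) := by
      rw [ht]
      nlinarith [mul_nonneg ht0 (sq_nonneg (t - 1/8)), sq_nonneg (t - 1 / 8), sq_nonneg t]
    linarith
  have hB : 2 * q * (2 * q - 1) ≤ r / 4 := by
    have : 2 * q * (2 * q - 1) ≤ (8 * q ^ 3 - 1 / 8) / 4 := by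
      rw [ht]
      nlinarith [mul_nonneg ht0 (sq_nonneg t), sq_nonneg t]
    linarith
  have hr0 : 0 ≤ r := by nlinarith
  have h3 : s * (4 * q - 1) ≤ 6 * (q - 1) * r * (4 * q - 1) :=
    mul_le_mul_of_nonneg_right hs (by linarith)
  have h4 := mul_le_mul_of_nonneg_left hA hr0
  nlinarith

lemma num_M {k : ℕ} (hk : 2 ≤ k) {p M : ℝ} (hr : 8 * (k : ℝ) ^ 3 - 1 / 8 ≤ p) (hM0 : 0 ≤ M)
    (hM : p ^ 2 / 3 * M ≤ p + (2 * (k : ℝ) - 1)) : p * (2 * (k : ℝ) - 1) * M ^ 2 < 1 := by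
  have h2 : (2 : ℝ) ≤ k := by exact_mod_cast hk
  set K : ℝ := 2 * (k : ℝ) - 1 with hK
  have h16 : 16 * K ≤ p := by
    have : 0 ≤ ((k : ℝ) - 2) * (k : ℝ) * ((k : ℝ) + 2) :=
      mul_nonneg (mul_nonneg (by linarith) (by linarith)) (by linarith)
    nlinarith
  have hK0 : 0 < K := by linarith
  have hp : 0 < p := by linarith
  have h3 : p * M ≤ 16 / 5 := by
    have : p * (p * M) ≤ p * (16 / 5) := by nlinarith
    exact le_of_mul_le_mul_left this hp
  have h0 : 0 ≤ p * M := by positivity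
  have h4 : (p * M) ^ 2 ≤ (16 / 5) ^ 2 := by gcongr
  have h5 : p * (p * K * M ^ 2) < p * 1 := by
    have : p * (p * K * M ^ 2) = K * (p * M) ^ 2 := by ring
    rw [this]
    nlinarith
  exact lt_of_mul_lt_mul_left h5 hp.le

lemma num_h {k : ℕ} (hk : 1 ≤ k) {p h : ℝ} (hr : 8 * (k : ℝ) ^ 3 - 1 / 8 ≤ p)
    (hh : h ≤ 2 * ((k : ℝ) - 1) * (2 * (k : ℝ) - 1)) : (h + 1) * (2 * (k : ℝ) - 1) < p := by
  have h1 : (1 : ℝ) ≤ k := by exact_mod_cast hk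
  have : (h + 1) * (2 * (k : ℝ) - 1) ≤
      (2 * ((k : ℝ) - 1) * (2 * (k : ℝ) - 1) + 1) * (2 * (k : ℝ) - 1) :=
    mul_le_mul_of_nonneg_right (by linarith) (by linarith)
  nlinarith [mul_nonneg (sub_nonneg.2 h1) (sub_nonneg.2 h1)]

lemma main_aux {V : Type*} [Fintype V] (k : ℕ) (hk : 1 ≤ k) (hn : 64 * k ^ 6 ≤ Fintype.card V)
    (G : SimpleGraph V) (hG : ¬ HasEDC G k)
    (hmax : ∀ G' : SimpleGraph V, ¬ HasEDC G' k → specRad G' ≤ specRad G) :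
    (∃ u : V, ∀ v, v ≠ u → G.Adj u v) ∧
    ∀ G' : SimpleGraph V, (∃ u : V, ∀ v, v ≠ u → G'.Adj u v) → ¬ HasEDC G' k →
      ecard G' ≤ ecard G := by
  have hk1 : (1 : ℝ) ≤ k := by exact_mod_cast hk
  have hk6 : 1 ≤ k ^ 6 := Nat.one_le_pow _ _ hk
  have hcard : 64 ≤ Fintype.card V := by omega
  haveI : Nonempty V := Fintype.card_pos_iff.1 (by omega)
  haveI : Nontrivial V := Fintype.one_lt_card_iff_nontrivial.1 (by omega)
  set N : ℝ := (Fintype.card V : ℝ) with hN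
  have hNk : 64 * (k : ℝ) ^ 6 ≤ N := by rw [hN]; exact_mod_cast hn
  have hN64 : 64 ≤ N := by rw [hN]; exact_mod_cast hcard
  set r : ℝ := Real.sqrt (N - 1) with hr
  have hr2 : r ^ 2 = N - 1 := Real.sq_sqrt (by linarith)
  have hk3 : (1 : ℝ) ≤ (k : ℝ) ^ 3 := one_le_pow₀ hk1
  have hrk : 8 * (k : ℝ) ^ 3 - 1 / 8 ≤ r := by
    apply Real.le_sqrt_of_sq_le
    nlinarith
  have hr0 : 0 < r := by linarith
  set ρ := specRad G with hρ
  have hray : ∀ G' : SimpleGraph V, ¬ HasEDC G' k → ∀ y : V → ℝ, qf G' y ≤ ρ * ∑ v, y v ^ 2 := by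
    intro G' h' y
    refine ((perron G').2 y).trans ?_
    exact mul_le_mul_of_nonneg_right (hmax G' h') (Finset.sum_nonneg fun _ _ => sq_nonneg _)
  -- step 1
  have hρr : r ≤ ρ := by
    obtain ⟨u⟩ := ‹Nonempty V›
    have hu : u ∉ {v : V | v ≠ u} := by simp
    have hS : ¬ HasEDC (pend (⊥ : SimpleGraph V) u {v | v ≠ u} hu) k := by
      intro h
      have := bot_hasEDC (pend_hasEDC _ _ _ hu h)
      omega
    have hd : ∀ v, v ≠ u → (pend (⊥ : SimpleGraph V) u {v | v ≠ u} hu).Adj u v := by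
      intro v hv
      exact Or.inr (Or.inl ⟨rfl, hv⟩)
    have h1 := dom_lower u hd ρ (hray _ hS) (1 / r)
    have h2 := dom_EE u hd
    have h3 : 0 ≤ ∑ a ∈ Finset.univ.erase u, ∑ b ∈ Finset.univ.erase u,
        av (pend (⊥ : SimpleGraph V) u {v | v ≠ u} hu) a b :=
      Finset.sum_nonneg fun _ _ => Finset.sum_nonneg fun _ _ => av_nonneg _ _ _
    rw [h2] at h3
    rw [← hN, ← hr2] at h1 h3
    have h4 := mul_nonneg (sq_nonneg (1 / r)) h3
    have h5 : 2 * r ^ 2 * (1 / r) = 2 * r := by field_simp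
    have h6 : r ^ 2 * (1 / r) ^ 2 = 1 := by field_simp
    rw [h5, h6] at h1
    linarith
  have hρ0 : 0 < ρ := by linarith
  have hK := hK_of hk hG
  set K : ℝ := 2 * (k : ℝ) - 1 with hKd
  have hK1 : 1 ≤ K := by linarith
  obtain ⟨⟨x, hx0, hxne, hxe⟩, -⟩ := perron G
  rw [← hρ] at hxe
  have hxpos : 0 < ∑ v, x v ^ 2 := by
    obtain ⟨v, hv⟩ := Function.ne_iff.1 hxne
    exact Finset.sum_pos' (fun _ _ => sq_nonneg _) ⟨v, Finset.mem_univ _, by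
      have : x v ≠ 0 := hv
      positivity⟩
  have hqx : qf G x = ρ * ∑ v, x v ^ 2 := by
    unfold qf
    rw [Finset.mul_sum]
    refine Finset.sum_congr rfl fun a _ => ?_
    have := hxe a
    calc ∑ b, av G a b * (x a * x b) = x a * ∑ b, av G a b * x b := by
          rw [Finset.mul_sum]; exact Finset.sum_congr rfl fun b _ => by ring
      _ = ρ * x a ^ 2 := by rw [this]; ring
  -- step 2
  obtain ⟨m, rfl⟩ : ∃ m, k = m + 1 := ⟨k - 1, by omega⟩
  have hmk : (m : ℝ) = ((m + 1 : ℕ) : ℝ) - 1 := by push_cast; ring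
  obtain ⟨u, hs⟩ : ∃ u, ((nw G u).card : ℝ) ≤ 6 * (m : ℝ) * r := by
    obtain ⟨F, hFG, hF, hFq⟩ := forest_decomp m G hG
    obtain ⟨⟨y, hy0, hyne, hye⟩, hyr⟩ := perron F
    set l := specRad F with hl
    have hlρ : ρ - 2 * m ≤ l := by
      have h1 := hFq x
      have h2 := hyr x
      rw [hqx] at h1
      have : ρ * ∑ v, x v ^ 2 ≤ (l + 2 * m) * ∑ v, x v ^ 2 := by linarith
      have := le_of_mul_le_mul_right this hxpos
      linarith
    have hlr : r - 2 * (((m + 1 : ℕ) : ℝ) - 1) ≤ l := by rw [← hmk]; linarith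
    obtain ⟨hl0, hls⟩ := num_forest hk hrk hlr
    obtain ⟨u, -, hu⟩ := Finset.exists_max_image Finset.univ y Finset.univ_nonempty
    have hyu : 0 < y u := by
      obtain ⟨v, hv⟩ := Function.ne_iff.1 hyne
      have : y v ≠ 0 := hv
      exact lt_of_lt_of_le (lt_of_le_of_ne (hy0 v) this.symm) (hu v (Finset.mem_univ _))
    have h1 := forest_star hF u (fun v => y v / y u) l hl0 (fun v => div_nonneg (hy0 v) hyu.le)
      (fun v => (div_le_one hyu).2 (hu v (Finset.mem_univ _))) (div_self hyu.ne')
      (fun v => by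
        rw [← mul_div_assoc, ← hye v, Finset.sum_div]
        exact Finset.sum_congr rfl fun z _ => by ring)
      (by rw [← hN, ← hr2]; exact hls)
    rw [← hN, ← hr2] at h1
    refine ⟨u, ?_⟩
    have h2 : nw G u ⊆ nw F u := by
      intro v hv
      rw [mem_nw] at hv ⊢
      exact ⟨hv.1, fun h => hv.2 (hFG h)⟩
    have h3 : ((nw G u).card : ℝ) ≤ (nw F u).card := by exact_mod_cast Finset.card_le_card h2
    have hm0 : (0 : ℝ) ≤ m := Nat.cast_nonneg m
    rw [← hmk] at hlr
    rcases le_or_gt r l with h | h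
    · have : r ^ 2 ≤ l ^ 2 := by gcongr
      have : 0 ≤ 6 * (m : ℝ) * r := by positivity
      linarith
    · have : (r - l) * (r + l) ≤ (2 * m) * (2 * r) :=
        mul_le_mul (by linarith) (by linarith) (by linarith) (by linarith)
      linarith
  -- step 3
  have hdom : ∀ v, v ≠ u → G.Adj u v := by
    by_contra hcon
    push Not at hcon
    obtain ⟨v0, hv0, hv0'⟩ := hcon
    have hspos : 0 < ((nw G u).card : ℝ) := by
      exact_mod_cast Finset.card_pos.2 ⟨v0, mem_nw.2 ⟨hv0, hv0'⟩⟩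
    have hk2 : 2 ≤ m + 1 := by
      by_contra h
      have : m = 0 := by omega
      subst this
      simp at hs
      rw [hs] at hspos
      simp at hspos
    obtain ⟨w, hwm, hw⟩ := Finset.exists_max_image (Finset.univ.erase u) x
      ⟨v0, Finset.mem_erase.2 ⟨hv0, Finset.mem_univ _⟩⟩
    have hwu : w ≠ u := Finset.ne_of_mem_erase hwm
    have hw' : ∀ v, v ≠ u → x v ≤ x w := fun v hv =>
      hw v (Finset.mem_erase.2 ⟨hv, Finset.mem_univ _⟩)
    have hMb := M_bound (by linarith) hK u x ρ hρ0.le hx0 hxe w hwu hw'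
    rw [hmk] at hs
    have hP := num_P hk2 hrk hs
    rw [← hKd] at hP
    have hPρ : K * (K + 1) + (nw G u).card * (2 * K + 1) ≤ 2 / 3 * ρ ^ 2 := by
      have : r ^ 2 ≤ ρ ^ 2 := by gcongr
      linarith
    have hMb2 : ρ ^ 2 / 3 * x w ≤ (ρ + K) * x u := by
      have := mul_le_mul_of_nonneg_right hPρ (hx0 w)
      linarith
    have hxu : 0 < x u := by
      rcases (hx0 u).lt_or_eq with h | h
      · exact h
      · exfalso
        rw [← h, mul_zero] at hMb2
        have hxw : x w ≤ 0 := by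
          by_contra hc
          push Not at hc
          have : 0 < ρ ^ 2 / 3 * x w := by positivity
          linarith
        apply hxne
        funext v
        by_cases hv : v = u
        · rw [hv, ← h]; rfl
        · exact le_antisymm ((hw' v hv).trans hxw) (hx0 v)
    have hunw : u ∉ (nw G u : Set V) := by
      intro h
      exact (mem_nw.1 (Finset.mem_coe.1 h)).1 rfl
    have hfin := pend_step hK u (fun v => x v / x u) ρ hρ0 (fun v => div_nonneg (hx0 v) hxu.le)
      (div_self hxu.ne')
      (fun v => by
        rw [← mul_div_assoc, ← hxe v, Finset.sum_div]
        exact Finset.sum_congr rfl fun z _ => by ring)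
      (x w / x u) (div_nonneg (hx0 w) hxu.le)
      (fun v hv => div_le_div_of_nonneg_right (hw' v hv) hxu.le) hunw
      (hray _ fun h => hG (pend_hasEDC _ _ _ hunw h))
    have hlt := num_M hk2 (hrk.trans hρr) (div_nonneg (hx0 w) hxu.le) (M := x w / x u) (by
      rw [← mul_div_assoc, div_le_iff₀ hxu]; exact hMb2)
    rw [← hKd] at hlt
    have := mul_lt_mul_of_pos_left hlt hspos
    linarith
  refine ⟨⟨u, hdom⟩, ?_⟩
  -- step 4
  intro G' ⟨u', hu'⟩ hG'
  by_contra hlt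
  push Not at hlt
  have hlt' : (ecard G : ℝ) + 1 ≤ ecard G' := by exact_mod_cast hlt
  have hxu : 0 < x u := by
    rcases (hx0 u).lt_or_eq with h | h
    · exact h
    · exfalso
      have h1 := hxe u
      rw [← h, mul_zero] at h1
      rw [Finset.sum_eq_zero_iff_of_nonneg fun z _ => mul_nonneg (av_nonneg _ _ _) (hx0 z)] at h1
      apply hxne
      funext v
      by_cases hv : v = u
      · rw [hv, ← h]; rfl
      · have := h1 v (Finset.mem_univ _)
        rw [av_of (hdom v hv), one_mul] at this
        exact this
  have hedge := dom_edges hK (by linarith) u hdom m hG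
  rw [← hN] at hedge
  have hh := num_h hk (hrk.trans hρr) (h := (ecard G : ℝ) - (N - 1)) (by
    rw [← hmk, ← hKd]; linarith)
  rw [← hKd] at hh
  have hh0 : 0 ≤ (ecard G : ℝ) - (N - 1) := by
    have h2 := dom_EE u hdom
    have h3 : 0 ≤ ∑ a ∈ Finset.univ.erase u, ∑ b ∈ Finset.univ.erase u, av G a b :=
      Finset.sum_nonneg fun _ _ => Finset.sum_nonneg fun _ _ => av_nonneg _ _ _
    rw [h2] at h3
    linarith
  have hKρ : K < ρ := by nlinarith
  have hup := dom_upper hK u hdom (fun v => x v / x u) ρ hKρ (fun v => div_nonneg (hx0 v) hxu.le)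
      (div_self hxu.ne')
      (fun v => by
        rw [← mul_div_assoc, ← hxe v, Finset.sum_div]
        exact Finset.sum_congr rfl fun z _ => by ring)
      (exists_ne u)
  have hlow := dom_lower u' hu' ρ (hray _ hG') (1 / ρ)
  rw [← hN] at hup hlow
  have hlow2 : 2 * (ecard G' : ℝ) - 2 * (N - 1) ≤ ρ * (ρ ^ 2 - (N - 1)) := by
    have h1 := mul_le_mul_of_nonneg_left hlow (sq_nonneg ρ)
    have e1 : ρ ^ 2 * ((1 / ρ) ^ 2 * (2 * (ecard G' : ℝ) - 2 * (N - 1)) + 2 * (N - 1) * (1 / ρ)) =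
      (2 * (ecard G' : ℝ) - 2 * (N - 1)) + 2 * (N - 1) * ρ := by field_simp
    have e2 : ρ ^ 2 * (ρ * (1 + (N - 1) * (1 / ρ) ^ 2)) = ρ * (ρ ^ 2 + (N - 1)) := by field_simp
    rw [e1, e2] at h1
    linarith
  set h := (ecard G : ℝ) - (N - 1) with hhd
  have h1 : 2 * (h + 1) ≤ ρ * (ρ ^ 2 - (N - 1)) := by linarith
  have h2 := mul_le_mul_of_nonneg_right h1 (sub_nonneg.2 hKρ.le)
  have h3 : ρ * ((ρ ^ 2 - (N - 1)) * (ρ - K)) ≤ ρ * (2 * h) :=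
    mul_le_mul_of_nonneg_left (by linarith) hρ0.le
  nlinarith

/-- For `k ≥ 1` and `n ≥ 64k⁶`, a spectral-extremal graph among all `n`-vertex graphs
without `k` pairwise edge-disjoint cycles has a dominating vertex and is also
edge-extremal among `n`-vertex graphs with a dominating vertex and without `k`
pairwise edge-disjoint cycles. -/
theorem spectral_extremal_is_edge_extremal (k n : ℕ) (hk : 1 ≤ k)
    (hn : 64 * k ^ 6 ≤ n) {V : Type*} [Fintype V] (hV : Fintype.card V = n)
    (G : SimpleGraph V) (hG : phi G ≤ k - 1)
    (hmax : ∀ G' : SimpleGraph V, phi G' ≤ k - 1 → specRad G' ≤ specRad G) :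
    (∃ u : V, ∀ v, v ≠ u → G.Adj u v) ∧
    ∀ G' : SimpleGraph V, (∃ u : V, ∀ v, v ≠ u → G'.Adj u v) → phi G' ≤ k - 1 →
      ecard G' ≤ ecard G := by
  subst hV
  exact (fun h => ⟨h.1, fun G' h1 h2 => h.2 G' h1 ((phi_le_iff G' hk).1 h2)⟩)
    (main_aux k hk hn G ((phi_le_iff G hk).1 hG)
      fun G' h' => hmax G' ((phi_le_iff G' hk).2 h'))

end PaperEDC
end

section
/- Let n ≥ 4096. Among all simple graphs on n vertices containing no 2 pairwise edge-disjoint cycles (i.e., with φ ≤ 1), the graph K1∇(K₃ ∪ (n−4)K₁), obtained by joining a new vertex to the disjoint union of a triangle and n−4 isolated vertices, is the unique graph (up to isomorphism) maximizing the spectral radius of the adjacency matrix. -/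
open scoped Classical

namespace PaperEDC

/-- The disjoint union `K₃ ∪ (m-3)K₁`: a triangle on the first three vertices of `Fin m`
together with `m - 3` isolated vertices. -/
def triPlusIsolated (m : ℕ) : SimpleGraph (Fin m) :=
  SimpleGraph.fromRel fun i j => i.val < 3 ∧ j.val < 3

def NoTwo {V : Type*} (G : SimpleGraph V) : Prop :=
  ∀ (a b : V) (p : G.Walk a a) (q : G.Walk b b), p.IsCycle → q.IsCycle →
    ∃ e ∈ p.edges, e ∈ q.edges

lemma noTwo_of_phi {V : Type*} [Fintype V] (G : SimpleGraph V) (hG : phi G ≤ 1) : NoTwo G := by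
  intro a b p q hp hq
  by_contra hcon
  push Not at hcon
  have h2 : HasEDC G 2 := by
    refine ⟨![⟨a, p⟩, ⟨b, q⟩], ?_, ?_⟩
    · intro i; fin_cases i
      · exact hp
      · exact hq
    · intro i j hij e he
      fin_cases i <;> fin_cases j
      · simp at hij
      · exact hcon e he
      · exact fun h => hcon e h he
      · simp at hij
  have hb : BddAbove {m | HasEDC G m} := by
    refine ⟨Fintype.card (Sym2 V), ?_⟩
    rintro m ⟨c, hc, hd⟩
    have hne : ∀ i, ∃ e, e ∈ (c i).2.edges := by
      intro i
      apply List.exists_mem_of_length_pos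
      rw [SimpleGraph.Walk.length_edges]
      have := (hc i).three_le_length
      omega
    choose e he using hne
    have hinj : Function.Injective e := by
      intro i j hij
      by_contra hne
      exact hd i j hne (e i) (he i) (hij ▸ he j)
    simpa using Fintype.card_le_of_injective e hinj
  have := le_csSup hb (show 2 ∈ {m | HasEDC G m} from h2)
  unfold phi at hG
  omega

lemma tri_cycle {V : Type*} {G : SimpleGraph V} {a b c : V} (h1 : G.Adj a b) (h2 : G.Adj b c)
    (h3 : G.Adj c a) : ∃ p : G.Walk a a, p.IsCycle ∧ p.edges = [s(a,b), s(b,c), s(c,a)] := by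
  refine ⟨.cons h1 (.cons h2 (.cons h3 .nil)), ?_, by simp⟩
  have := h1.ne; have := h2.ne; have := h3.ne
  simp [SimpleGraph.Walk.isCycle_def, SimpleGraph.Walk.isTrail_def]
  grind

lemma quad_cycle {V : Type*} {G : SimpleGraph V} {a b c d : V} (h1 : G.Adj a b) (h2 : G.Adj b c)
    (h3 : G.Adj c d) (h4 : G.Adj d a) (hac : a ≠ c) (hbd : b ≠ d) :
    ∃ p : G.Walk a a, p.IsCycle ∧ p.edges = [s(a,b), s(b,c), s(c,d), s(d,a)] := by
  refine ⟨.cons h1 (.cons h2 (.cons h3 (.cons h4 .nil))), ?_, by simp⟩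
  have := h1.ne; have := h2.ne; have := h3.ne; have := h4.ne
  simp [SimpleGraph.Walk.isCycle_def, SimpleGraph.Walk.isTrail_def]
  grind

lemma codeg_le {V : Type*} [Fintype V] {G : SimpleGraph V} (h : NoTwo G) {u w : V} (huw : w ≠ u) :
    (Finset.univ.filter fun v => G.Adj u v ∧ G.Adj w v).card ≤ 3 := by
  by_contra hc
  push Not at hc
  obtain ⟨S, hS, hS4⟩ := Finset.exists_subset_card_eq (show 4 ≤ _ from hc)
  obtain ⟨a, b, c, d, hab, hac, had, hbc, hbd, hcd, rfl⟩ := Finset.card_eq_four.1 hS4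
  have ha := hS (show a ∈ _ by simp)
  have hb := hS (show b ∈ _ by simp)
  have hc' := hS (show c ∈ _ by simp)
  have hd := hS (show d ∈ _ by simp)
  simp only [Finset.mem_filter, Finset.mem_univ, true_and] at ha hb hc' hd
  obtain ⟨p, hp, hpe⟩ := quad_cycle ha.1 ha.2.symm hb.2 hb.1.symm huw.symm hab
  obtain ⟨q, hq, hqe⟩ := quad_cycle hc'.1 hc'.2.symm hd.2 hd.1.symm huw.symm hcd
  obtain ⟨e, he, he'⟩ := h _ _ p q hp hq
  have := ha.1.ne; have := ha.2.ne; have := hb.1.ne; have := hb.2.ne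
  have := hc'.1.ne; have := hc'.2.ne; have := hd.1.ne; have := hd.2.ne
  rw [hpe] at he; rw [hqe] at he'
  simp only [List.mem_cons, List.not_mem_nil, or_false] at he he'
  clear hpe hqe hp hq
  rcases he with rfl | he
  all_goals (try rcases he with rfl | he)
  all_goals (try rcases he with rfl | he)
  all_goals (try subst he)
  all_goals
    simp only [Sym2.eq_iff] at he'
    grind

lemma two_disj {V : Type*} {G : SimpleGraph V} (h : NoTwo G) {u a b c d : V}
    (ha : G.Adj u a) (hb : G.Adj u b) (hc : G.Adj u c) (hd : G.Adj u d)
    (hab : G.Adj a b) (hcd : G.Adj c d) : a = c ∨ a = d ∨ b = c ∨ b = d := by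
  by_contra hcon
  obtain ⟨p, hp, hpe⟩ := tri_cycle ha hab hb.symm
  obtain ⟨q, hq, hqe⟩ := tri_cycle hc hcd hd.symm
  obtain ⟨e, he, he'⟩ := h _ _ p q hp hq
  have := ha.ne; have := hb.ne; have := hc.ne; have := hd.ne
  rw [hpe] at he; rw [hqe] at he'
  simp only [List.mem_cons, List.not_mem_nil, or_false] at he he'
  clear hpe hqe hp hq
  rcases he with rfl | he
  all_goals (try rcases he with rfl | he)
  all_goals (try rcases he with rfl | he)
  all_goals (try subst he)
  all_goals
    simp only [Sym2.eq_iff] at he'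
    grind

lemma three_nb {V : Type*} {G : SimpleGraph V} (h : NoTwo G) {u v a b c : V}
    (hv : G.Adj u v) (ha : G.Adj u a) (hb : G.Adj u b) (hc : G.Adj u c)
    (hva : G.Adj v a) (hvb : G.Adj v b) (hvc : G.Adj v c) : a = b ∨ a = c ∨ b = c := by
  by_contra hcon
  push Not at hcon
  obtain ⟨p, hp, hpe⟩ := tri_cycle hv hva ha.symm
  obtain ⟨q, hq, hqe⟩ := quad_cycle hb hvb.symm hvc hc.symm hv.ne hcon.2.2
  obtain ⟨e, he, he'⟩ := h _ _ p q hp hq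
  have := ha.ne; have := hb.ne; have := hc.ne; have := hv.ne
  have := hva.ne; have := hvb.ne; have := hvc.ne
  rw [hpe] at he; rw [hqe] at he'
  simp only [List.mem_cons, List.not_mem_nil, or_false] at he he'
  clear hpe hqe hp hq
  rcases he with rfl | he
  all_goals (try rcases he with rfl | he)
  all_goals (try rcases he with rfl | he)
  all_goals (try subst he)
  all_goals
    simp only [Sym2.eq_iff] at he'
    grind

lemma exists_T {V : Type*} [Fintype V] {G : SimpleGraph V} (h : NoTwo G) (u : V)
    (hcard : 4 ≤ Fintype.card V) :
    ∃ T : Finset V, T.card = 3 ∧ u ∉ T ∧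
      ∀ x y, G.Adj u x → G.Adj u y → G.Adj x y → x ∈ T ∧ y ∈ T := by
  suffices hs : ∃ T : Finset V, T.card ≤ 3 ∧ u ∉ T ∧
      ∀ x y, G.Adj u x → G.Adj u y → G.Adj x y → x ∈ T ∧ y ∈ T by
    obtain ⟨T, hT, hu, hh⟩ := hs
    obtain ⟨T', h1, h2, h3⟩ := Finset.exists_subsuperset_card_eq
      (show T ⊆ Finset.univ.erase u by
        intro x hx; simp; rintro rfl; exact hu hx) hT
      (by rw [Finset.card_erase_of_mem (Finset.mem_univ u), Finset.card_univ]; omega)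
    refine ⟨T', h3, fun hx => by simpa using h2 hx, fun x y a b c => ?_⟩
    exact ⟨h1 (hh x y a b c).1, h1 (hh x y a b c).2⟩
  by_cases hE : ∃ a b, G.Adj u a ∧ G.Adj u b ∧ G.Adj a b
  swap
  · refine ⟨∅, by simp, by simp, fun x y a b c => (hE ⟨x, y, a, b, c⟩).elim⟩
  have key : ∀ a b c, G.Adj u a → G.Adj u b → G.Adj u c → G.Adj a b → G.Adj a c → b ≠ c →
      ∃ T : Finset V, T.card ≤ 3 ∧ u ∉ T ∧
      ∀ x y, G.Adj u x → G.Adj u y → G.Adj x y → x ∈ T ∧ y ∈ T := by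
    intro a b c ha hb hc hab hac hbc
    refine ⟨{a, b, c}, Finset.card_le_three, ?_, ?_⟩
    · have := ha.ne; have := hb.ne; have := hc.ne
      simp; grind
    · intro x y hx hy hxy
      have h1 := two_disj h ha hb hx hy hab hxy
      have h2 := two_disj h ha hc hx hy hac hxy
      have h3 : ∀ z, G.Adj u z → G.Adj a z → z = b ∨ z = c := by
        intro z hz haz
        have := three_nb h ha hb hc hz hab hac haz
        grind
      have h4 := h3 x hx
      have h5 := h3 y hy
      have := hxy.symm
      simp
      grind
  obtain ⟨a, b, ha, hb, hab⟩ := hE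
  by_cases h1 : ∃ c, G.Adj u c ∧ G.Adj a c ∧ b ≠ c
  · obtain ⟨c, h1, h2, h3⟩ := h1
    exact key a b c ha hb h1 hab h2 h3
  by_cases h2 : ∃ c, G.Adj u c ∧ G.Adj b c ∧ a ≠ c
  · obtain ⟨c, h1, h2, h3⟩ := h2
    exact key b a c hb ha h1 hab.symm h2 h3
  push Not at h1 h2
  refine ⟨{a, b}, Finset.card_le_two.trans (by norm_num), ?_, ?_⟩
  · have := ha.ne; have := hb.ne
    simp; grind
  · intro x y hx hy hxy
    have h3 := two_disj h ha hb hx hy hab hxy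
    have := hxy.symm
    have := h1 x; have := h1 y; have := h2 x; have := h2 y
    simp
    grind

lemma acyclic_edges {V : Type*} [Fintype V] {G : SimpleGraph V} [Fintype G.edgeSet] (h : G.IsAcyclic) :
    G.edgeFinset.card ≤ Fintype.card V := by
  cases isEmpty_or_nonempty V
  · have : G.edgeFinset = ∅ := by
      ext e; induction e with | _ a b => exact isEmptyElim a
    simp [this]
  · obtain ⟨F, h1, h2, h3⟩ := (SimpleGraph.connected_top (V := V)).exists_isTree_le_of_le_of_isAcyclic
      le_top h
    have := h3.card_edgeFinset
    have : G.edgeFinset.card ≤ F.edgeFinset.card := Finset.card_mono (by simpa using h1)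
    omega

lemma noTwo_edges {V : Type*} [Fintype V] {G : SimpleGraph V} [Fintype G.edgeSet] (h : NoTwo G) :
    G.edgeFinset.card ≤ 2 * Fintype.card V := by
  by_cases ha : G.IsAcyclic
  · have := acyclic_edges ha; omega
  unfold SimpleGraph.IsAcyclic at ha
  push Not at ha
  obtain ⟨v, c, hc⟩ := ha
  have hlen : c.length ≤ Fintype.card V := by
    have h1 := hc.support_nodup
    have h2 := h1.length_le_card
    simpa using h2
  have hac : (G.deleteEdges {e | e ∈ c.edges}).IsAcyclic := by
    intro w p hp
    obtain ⟨e, he1, he2⟩ := h _ _ c (p.mapLe (SimpleGraph.deleteEdges_le _)) hc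
      (hp.mapLe _)
    have : e ∈ p.edges := by simpa [SimpleGraph.Walk.edges_mapLe_eq_edges] using he2
    have := p.edges_subset_edgeSet this
    simp [SimpleGraph.edgeSet_deleteEdges] at this
    exact this.2 he1
  have h1 : (G.deleteEdges {e | e ∈ c.edges}).edgeFinset.card ≤ _ := acyclic_edges hac
  have h2 : G.edgeFinset ⊆ (G.deleteEdges {e | e ∈ c.edges}).edgeFinset ∪ c.edges.toFinset := by
    intro e he
    simp [SimpleGraph.edgeSet_deleteEdges] at he ⊢
    tauto
  have h3 := Finset.card_le_card h2
  have h4 := Finset.card_union_le (G.deleteEdges {e | e ∈ c.edges}).edgeFinset c.edges.toFinset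
  have h5 := List.toFinset_card_le c.edges
  rw [SimpleGraph.Walk.length_edges] at h5
  omega

lemma noTwo_induce {V : Type*} {G : SimpleGraph V} (h : NoTwo G) (s : Set V) :
    NoTwo (G.induce s) := by
  intro a b p q hp hq
  obtain ⟨e, he, he'⟩ := h _ _ (p.map (SimpleGraph.Embedding.induce s).toHom)
    (q.map (SimpleGraph.Embedding.induce s).toHom)
    (hp.map (SimpleGraph.Embedding.induce (G := G) s).injective)
    (hq.map (SimpleGraph.Embedding.induce (G := G) s).injective)
  rw [SimpleGraph.Walk.edges_map, List.mem_map] at he he'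
  obtain ⟨x, hx, rfl⟩ := he
  obtain ⟨y, hy, hxy⟩ := he'
  have := Sym2.map.injective (SimpleGraph.Embedding.induce (G := G) s).injective hxy
  exact ⟨x, hx, this ▸ hy⟩

lemma sum_deg_L {V : Type*} [Fintype V] {G : SimpleGraph V} (h : NoTwo G) (L : Finset V) :
    ∑ w ∈ L, (L.filter fun v => G.Adj w v).card ≤ 4 * L.card := by
  have h2 := (G.induce (L : Set V)).sum_degrees_eq_twice_card_edges
  have h3 : ∑ w ∈ L, (L.filter fun v => G.Adj w v).card
      = ∑ w : (L : Set V), (G.induce (L : Set V)).degree w := by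
    rw [← Finset.sum_coe_sort L]
    refine Finset.sum_congr rfl fun w _ => ?_
    rw [← SimpleGraph.card_neighborFinset_eq_degree]
    symm
    refine Finset.card_bij (fun x _ => x.1) ?_ ?_ ?_
    · intro x hx
      simp at hx
      have := x.2
      simp at this
      simp [hx, this]
    · intro x _ y _ hxy; exact Subtype.ext hxy
    · intro y hy
      simp at hy
      exact ⟨⟨y, hy.1⟩, by simpa using hy.2, rfl⟩
  have h4 : Fintype.card (L : Set V) = L.card := by simp
  have h5 := noTwo_edges (noTwo_induce h (L : Set V))
  rw [h3, h2]
  rw [h4] at h5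
  have h6 : (SimpleGraph.induce (L : Set V) G).edgeFinset.card ≤ 2 * L.card := by
    convert h5
  refine (Nat.mul_le_mul_left 2 h6).trans (by omega)

lemma key_ineq {V : Type*} [Fintype V] {G : SimpleGraph V} (h : NoTwo G) (u : V)
    (T : Finset V) (hT : T.card = 3) (huT : u ∉ T)
    (hTe : ∀ x y, G.Adj u x → G.Adj u y → G.Adj x y → x ∈ T ∧ y ∈ T)
    (z : V → ℝ) (ρ : ℝ) (hρ : 0 ≤ ρ) (hz0 : ∀ v, 0 ≤ z v) (hzu : z u = 1)
    (hz : ∀ v, ρ * z v ≤ ∑ w ∈ Finset.univ.filter (G.Adj v), z w)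
    (M : ℝ) (hM : ∀ v, v ≠ u → z v ≤ M) :
    ρ ^ 2 + (Finset.univ.filter fun v => v ≠ u ∧ ¬ G.Adj u v).card + 1 ≤ Fintype.card V + 6 * M
      + 3 * ∑ w ∈ Finset.univ.filter (fun v => v ≠ u ∧ ¬ G.Adj u v), z w := by
  set N := Finset.univ.filter (G.Adj u) with hN
  set L := Finset.univ.filter (fun v => v ≠ u ∧ ¬ G.Adj u v) with hL
  have huN : u ∉ N := by simp [hN]
  have hdisj : Disjoint N L := by
    rw [Finset.disjoint_left]; intro x; simp [hN, hL]; tauto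
  have hdisj2 : Disjoint {u} (N ∪ L) := by
    simp [hN, hL]
  have hun : (Finset.univ : Finset V) = {u} ∪ (N ∪ L) := by
    ext x; simp [hN, hL]; tauto
  have hcard : (Fintype.card V : ℝ) = 1 + (N.card + L.card) := by
    rw [← Finset.card_univ, hun, Finset.card_union_of_disjoint hdisj2,
      Finset.card_union_of_disjoint hdisj]
    simp
  set C : V → ℕ := fun w => (Finset.univ.filter fun v => G.Adj u v ∧ G.Adj w v).card with hC
  have h1 : ρ ^ 2 ≤ ∑ w, (C w : ℝ) * z w := by
    have e1 : ρ ^ 2 ≤ ρ * ∑ v ∈ N, z v := by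
      have := hz u
      rw [hzu] at this
      nlinarith
    have e2 : ρ * ∑ v ∈ N, z v ≤ ∑ v ∈ N, ∑ w ∈ Finset.univ.filter (G.Adj v), z w := by
      rw [Finset.mul_sum]
      exact Finset.sum_le_sum fun v _ => hz v
    have e3 : ∑ v ∈ N, ∑ w ∈ Finset.univ.filter (G.Adj v), z w = ∑ w, (C w : ℝ) * z w := by
      simp_rw [Finset.sum_filter]
      rw [Finset.sum_comm]
      refine Finset.sum_congr rfl fun w _ => ?_
      rw [← Finset.sum_filter, Finset.sum_const, nsmul_eq_mul]
      congr 2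
      rw [hN, Finset.filter_filter]
      simp only [hC]
      congr 1
      ext x; simp [G.adj_comm]
    linarith
  have h2 : ∑ w, (C w : ℝ) * z w = N.card + (∑ w ∈ N, (C w : ℝ) * z w
      + ∑ w ∈ L, (C w : ℝ) * z w) := by
    rw [hun, Finset.sum_union hdisj2, Finset.sum_union hdisj]
    simp [hzu, hC, hN]
  have hM0 : 0 ≤ M := by
    obtain ⟨a, ha⟩ := Finset.card_pos.1 (show 0 < T.card by omega)
    exact (hz0 a).trans (hM a (by rintro rfl; exact huT ha))
  have h3 : ∑ w ∈ N, (C w : ℝ) * z w ≤ 6 * M := by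
    have e1 : ∑ w ∈ N, (C w : ℝ) * z w ≤ ∑ w ∈ N, if w ∈ T then 2 * M else 0 := by
      refine Finset.sum_le_sum fun w hw => ?_
      have hw' : G.Adj u w := by simpa [hN] using hw
      split_ifs with hwT
      · have : C w ≤ 2 := by
          have : (Finset.univ.filter fun v => G.Adj u v ∧ G.Adj w v) ⊆ T.erase w := by
            intro x hx
            simp at hx
            simp
            exact ⟨hx.2.ne', (hTe w x hw' hx.1 hx.2).2⟩
          have := Finset.card_le_card this
          rw [Finset.card_erase_of_mem hwT, hT] at this
          exact this
        have : (C w : ℝ) ≤ 2 := by exact_mod_cast this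
        have := hM w hw'.ne'
        have := hz0 w
        nlinarith
      · have : C w = 0 := by
          simp only [hC, Finset.card_eq_zero]
          ext x
          simp
          intro hx hwx
          exact hwT (hTe w x hw' hx hwx).1
        simp [this]
    have e2 : (∑ w ∈ N, if w ∈ T then 2 * M else 0) ≤ 6 * M := by
      rw [← Finset.sum_filter, Finset.sum_const, nsmul_eq_mul]
      have : (N.filter (· ∈ T)).card ≤ 3 := by
        rw [← hT]; apply Finset.card_le_card; intro x; simp
      have : ((N.filter (· ∈ T)).card : ℝ) ≤ 3 := by exact_mod_cast this
      nlinarith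
    linarith
  have h4 : ∑ w ∈ L, (C w : ℝ) * z w ≤ 3 * ∑ w ∈ L, z w := by
    rw [Finset.mul_sum]
    refine Finset.sum_le_sum fun w hw => ?_
    have hw' : w ≠ u := by simp [hL] at hw; exact hw.1
    have : (C w : ℝ) ≤ 3 := by exact_mod_cast codeg_le h hw'
    nlinarith [hz0 w]
  linarith

lemma l_zero {V : Type*} [Fintype V] {G : SimpleGraph V} (h : NoTwo G) (u : V)
    (T : Finset V) (hT : T.card = 3) (huT : u ∉ T)
    (hTe : ∀ x y, G.Adj u x → G.Adj u y → G.Adj x y → x ∈ T ∧ y ∈ T)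
    (z : V → ℝ) (ρ : ℝ) (hρ : 63 ≤ ρ) (hz0 : ∀ v, 0 ≤ z v) (hzu : z u = 1) (hz1 : ∀ v, z v ≤ 1)
    (hz : ∀ v, ρ * z v ≤ ∑ w ∈ Finset.univ.filter (G.Adj v), z w)
    (hρn : (Fintype.card V : ℝ) - 1 ≤ ρ ^ 2) : ∀ v, v ≠ u → G.Adj u v := by
  set L := Finset.univ.filter (fun v => v ≠ u ∧ ¬ G.Adj u v) with hL
  have hdeg : ∀ w, w ≠ u → (Finset.univ.filter (G.Adj w)).card ≤
      (if G.Adj w u then 1 else 0) + 3 + (L.filter fun v => G.Adj w v).card := by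
    intro w hw
    have e1 : Finset.univ.filter (G.Adj w) ⊆ (if G.Adj w u then {u} else ∅) ∪
      (Finset.univ.filter fun v => G.Adj u v ∧ G.Adj w v) ∪ (L.filter fun v => G.Adj w v) := by
      intro x hx
      simp at hx
      by_cases hxu : x = u
      · subst hxu; simp [hx]
      · simp [hL, hx, hxu]; tauto
    refine (Finset.card_le_card e1).trans ?_
    refine (Finset.card_union_le _ _).trans (Nat.add_le_add_right ?_ _)
    refine (Finset.card_union_le _ _).trans (Nat.add_le_add ?_ (codeg_le h hw))
    split_ifs <;> simp
  have hLs : ρ * ∑ w ∈ L, z w ≤ 7 * L.card := by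
    have e1 : ρ * ∑ w ∈ L, z w ≤ ∑ w ∈ L, ((3 + (L.filter fun v => G.Adj w v).card : ℕ) : ℝ) := by
      rw [Finset.mul_sum]
      refine Finset.sum_le_sum fun w hw => ?_
      simp [hL] at hw
      have := hdeg w hw.1
      rw [if_neg (fun hh => hw.2 hh.symm)] at this
      refine (hz w).trans ?_
      refine (Finset.sum_le_sum fun x _ => hz1 x).trans ?_
      rw [Finset.sum_const, nsmul_eq_mul, mul_one]
      exact_mod_cast (by omega)
    have e2 := sum_deg_L h L
    refine e1.trans ?_
    rw [← Nat.cast_sum, Finset.sum_add_distrib]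
    simp only [Finset.sum_const, smul_eq_mul]
    exact_mod_cast (by omega)
  have hS0 : 0 ≤ ∑ w ∈ L, z w := Finset.sum_nonneg fun w _ => hz0 w
  have hl9 : L.card ≤ 9 := by
    have k := key_ineq h u T hT huT hTe z ρ (by linarith) hz0 hzu hz 1 (fun v _ => hz1 v)
    rw [← hL] at k
    have k2 : (63:ℝ) * ∑ w ∈ L, z w ≤ 7 * L.card := by nlinarith
    have : (L.card : ℝ) < 10 := by linarith
    have : L.card < 10 := by exact_mod_cast this
    omega
  have hboot : ∀ M : ℝ, 0 ≤ M → (∀ v, v ≠ u → z v ≤ M) → ∀ w, w ≠ u → 63 * z w ≤ 1 + 12 * M := by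
    intro M hM0 hM w hw
    have e0 := hdeg w hw
    have e1 : ∑ x ∈ Finset.univ.filter (G.Adj w), z x ≤ 1 + 12 * M := by
      have e2 : ∑ x ∈ (Finset.univ.filter (G.Adj w)).erase u, z x ≤ 12 * M := by
        have e3 : ((Finset.univ.filter (G.Adj w)).erase u).card ≤ 12 := by
          have e4 := Finset.card_filter_le L (fun v => G.Adj w v)
          split_ifs at e0 with hh
          · rw [Finset.card_erase_of_mem (by simpa using hh)]
            omega
          · have := Finset.card_erase_le (s := Finset.univ.filter (G.Adj w)) (a := u)
            omega
        have e4 : (((Finset.univ.filter (G.Adj w)).erase u).card : ℝ) ≤ 12 := by exact_mod_cast e3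
        have e5 : ∑ x ∈ (Finset.univ.filter (G.Adj w)).erase u, z x ≤
            ∑ x ∈ (Finset.univ.filter (G.Adj w)).erase u, M :=
          Finset.sum_le_sum fun x hx => hM x (Finset.ne_of_mem_erase hx)
        rw [Finset.sum_const, nsmul_eq_mul] at e5
        nlinarith
      by_cases hh : G.Adj w u
      · rw [← Finset.add_sum_erase _ _ (show u ∈ Finset.univ.filter (G.Adj w) by simpa using hh)]
        linarith
      · rw [Finset.erase_eq_of_notMem (by simpa using hh)] at e2
        linarith
    have := hz w
    nlinarith [hz0 w]
  have b1 : ∀ v, v ≠ u → z v ≤ 13 / 63 := by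
    intro v hv
    have := hboot 1 zero_le_one (fun v _ => hz1 v) v hv
    linarith
  have b2 : ∀ v, v ≠ u → z v ≤ 1 / 15 := by
    intro v hv
    have := hboot _ (by norm_num) b1 v hv
    linarith
  have k := key_ineq h u T hT huT hTe z ρ (by linarith) hz0 hzu hz (1/15) b2
  rw [← hL] at k
  have k2 : ∑ w ∈ L, z w ≤ L.card * (1/15) := by
    rw [← nsmul_eq_mul, ← Finset.sum_const]
    refine Finset.sum_le_sum fun w hw => b2 w ?_
    simp [hL] at hw; exact hw.1
  have : (L.card : ℝ) < 1 := by linarith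
  have : L.card < 1 := by exact_mod_cast this
  have hLe : L = ∅ := by rw [← Finset.card_eq_zero]; omega
  intro v hv
  by_contra hcon
  have : v ∈ L := by simp [hL, hv, hcon]
  simp [hLe] at this

lemma final_struct {V : Type*} [Fintype V] {G : SimpleGraph V} (h : NoTwo G) (u : V)
    (z : V → ℝ) (ρ : ℝ) (hρ : 63 ≤ ρ) (hz0 : ∀ v, 0 ≤ z v) (hzu : z u = 1) (hz1 : ∀ v, z v ≤ 1)
    (hz : ∀ v, ρ * z v ≤ ∑ w ∈ Finset.univ.filter (G.Adj v), z w)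
    (hcard : 4 ≤ Fintype.card V)
    (hρn : 6 ≤ (ρ ^ 2 - Fintype.card V + 1) * (ρ - 2)) :
    ∃ a b c, a ≠ b ∧ a ≠ c ∧ b ≠ c ∧ u ≠ a ∧ u ≠ b ∧ u ≠ c ∧
      ∀ x y, G.Adj x y ↔ x ≠ y ∧ (x = u ∨ y = u ∨
        ((x = a ∨ x = b ∨ x = c) ∧ (y = a ∨ y = b ∨ y = c))) := by
  obtain ⟨T, hT, huT, hTe⟩ := exists_T h u hcard
  have hρn' : (Fintype.card V : ℝ) - 1 ≤ ρ ^ 2 := by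
    by_contra hcon
    push Not at hcon
    nlinarith
  have hall := l_zero h u T hT huT hTe z ρ hρ hz0 hzu hz1 hz hρn'
  obtain ⟨a, b, c, hab, hac, hbc, rfl⟩ := Finset.card_eq_three.1 hT
  simp only [Finset.mem_insert, Finset.mem_singleton, not_or] at huT hTe
  obtain ⟨hua, hub, huc⟩ : u ≠ a ∧ u ≠ b ∧ u ≠ c := huT
  have hleaf : ∀ v, v ≠ u → v ≠ a → v ≠ b → v ≠ c → ρ * z v ≤ 1 := by
    intro v h1 h2 h3 h4
    refine (hz v).trans ?_
    have : Finset.univ.filter (G.Adj v) ⊆ {u} := by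
      intro x hx
      simp at hx
      by_contra hxu
      simp at hxu
      have := (hTe v x (hall v h1) (hall x hxu) hx).1
      tauto
    refine (Finset.sum_le_sum_of_subset_of_nonneg this fun x _ _ => hz0 x).trans ?_
    simp [hzu]
  have htri : ∀ p q r, (∀ x, (x = a ∨ x = b ∨ x = c) → (x = p ∨ x = q ∨ x = r)) → p ≠ u →
      p ≠ q → p ≠ r → q ≠ r → q ≠ u → r ≠ u →
      ρ * z p ≤ 1 + (if G.Adj p q then z q else 0) + (if G.Adj p r then z r else 0) := by
    intro p q r hs hp hpq hpr hqr hq hr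
    refine (hz p).trans ?_
    have : Finset.univ.filter (G.Adj p) ⊆ insert u (({q, r} : Finset V).filter (G.Adj p)) := by
      intro x hx
      simp at hx
      by_cases hxu : x = u
      · simp [hxu]
      have := hs x (hTe p x (hall p hp) (hall x hxu) hx).2
      have := hx.ne
      simp [hxu, hx]
      grind
    refine (Finset.sum_le_sum_of_subset_of_nonneg this fun x _ _ => hz0 x).trans ?_
    rw [Finset.sum_insert (by simp; grind), Finset.sum_filter, Finset.sum_pair hqr, hzu]
    linarith
  have hta := htri a b c (by tauto) hua.symm hab hac hbc hub.symm huc.symm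
  have htb := htri b a c (by tauto) hub.symm hab.symm hbc hac hua.symm huc.symm
  have htc := htri c a b (by tauto) huc.symm hac.symm hbc.symm hab hua.symm hub.symm
  have hsum : ρ ^ 2 ≤ ρ * (z a + z b + z c) + (Fintype.card V - 4) := by
    have e0 := hz u
    rw [hzu, mul_one] at e0
    have e1 : Finset.univ.filter (G.Adj u) = {a, b, c} ∪ (Finset.univ \ {u, a, b, c}) := by
      ext x
      simp
      constructor
      · intro hx
        have := hx.ne'
        tauto
      · intro hx
        apply hall
        rintro rfl
        tauto
    rw [e1, Finset.sum_union (by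
      rw [Finset.disjoint_left]; intro x; simp; tauto)] at e0
    have e2 : ∑ x ∈ ({a, b, c} : Finset V), z x = z a + z b + z c := by
      rw [Finset.sum_insert (by simp [hab, hac]), Finset.sum_pair hbc]; ring
    have e3 : ρ * ∑ x ∈ Finset.univ \ {u, a, b, c}, z x ≤ Fintype.card V - 4 := by
      have e4 : (({u, a, b, c} : Finset V)).card = 4 := by
        rw [Finset.card_insert_of_notMem (by simp [hua, hub, huc]), hT]
      have e5 : ((Finset.univ \ {u, a, b, c} : Finset V).card : ℝ) = Fintype.card V - 4 := by
        rw [Finset.card_sdiff_of_subset (Finset.subset_univ _), e4, Finset.card_univ]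
        push_cast [hcard]; ring
      rw [← e5, Finset.mul_sum, Finset.card_eq_sum_ones]
      push_cast
      refine Finset.sum_le_sum fun x hx => ?_
      simp at hx
      exact hleaf x hx.1 hx.2.1 hx.2.2.1 hx.2.2.2
    rw [e2] at e0
    nlinarith
  have hstrict : ∀ p q r : ℝ, 0 ≤ p → 0 ≤ q → 0 ≤ r → p + q + r = z a + z b + z c →
      ρ * p ≤ 1 + r → ρ * q ≤ 1 + r → ρ * r ≤ 1 + p + q → False := by
    intro p q r hp hq hr hs h1 h2 h3
    rw [← hs] at hsum
    -- (ρ-2) s < 3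
    have h4 : (ρ - 2) * (p + q + r) < 3 := by
      by_contra hcon
      push Not at hcon
      have : p + q ≤ 0 := by nlinarith
      have hp0 : p = 0 := by linarith
      have hq0 : q = 0 := by linarith
      subst hp0 hq0
      nlinarith
    nlinarith
  have za := hz0 a
  have zb := hz0 b
  have zc := hz0 c
  have hab' : G.Adj a b := by
    by_contra hcon
    have hcon' : ¬ G.Adj b a := fun hh => hcon hh.symm
    rw [if_neg hcon] at hta
    rw [if_neg hcon'] at htb
    refine hstrict (z a) (z b) (z c) za zb zc rfl ?_ ?_ ?_
    · split_ifs at hta <;> linarith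
    · split_ifs at htb <;> linarith
    · split_ifs at htc <;> linarith
  have hac' : G.Adj a c := by
    by_contra hcon
    have hcon' : ¬ G.Adj c a := fun hh => hcon hh.symm
    rw [if_neg hcon] at hta
    rw [if_neg hcon'] at htc
    refine hstrict (z a) (z c) (z b) za zc zb (by ring) ?_ ?_ ?_
    · split_ifs at hta <;> linarith
    · split_ifs at htc <;> linarith
    · split_ifs at htb <;> linarith
  have hbc' : G.Adj b c := by
    by_contra hcon
    have hcon' : ¬ G.Adj c b := fun hh => hcon hh.symm
    rw [if_neg hcon] at htb
    rw [if_neg hcon'] at htc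
    refine hstrict (z b) (z c) (z a) zb zc za (by ring) ?_ ?_ ?_
    · split_ifs at htb <;> linarith
    · split_ifs at htc <;> linarith
    · split_ifs at hta <;> linarith
  refine ⟨a, b, c, hab, hac, hbc, hua, hub, huc, fun x y => ⟨fun hxy => ⟨hxy.ne, ?_⟩, ?_⟩⟩
  · by_cases hx : x = u
    · exact Or.inl hx
    by_cases hy : y = u
    · exact Or.inr (Or.inl hy)
    exact Or.inr (Or.inr (hTe x y (hall x hx) (hall y hy) hxy))
  · rintro ⟨hne, rfl | rfl | ⟨hx, hy⟩⟩
    · exact hall y hne.symm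
    · exact (hall x hne).symm
    · have := hab'.symm; have := hac'.symm; have := hbc'.symm
      rcases hx with rfl | rfl | rfl <;> rcases hy with rfl | rfl | rfl <;>
        first | assumption | exact absurd rfl hne

lemma eig_finite {V : Type*} [Fintype V] (G : SimpleGraph V) :
    {x : ℝ | ∃ f : V → ℝ, f ≠ 0 ∧
      ∀ v : V, ∑ u : V, (if G.Adj v u then f u else 0) = x * f v}.Finite := by
  refine (Module.End.finite_hasEigenvalue (Matrix.toLin' (G.adjMatrix ℝ))).subset ?_
  rintro x ⟨f, hf, hx⟩
  refine Module.End.hasEigenvalue_of_hasEigenvector (x := f) ⟨?_, hf⟩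
  rw [Module.End.mem_eigenspace_iff]
  ext v
  simp [Matrix.mulVec, dotProduct, SimpleGraph.adjMatrix_apply, ← hx v]

lemma specRad_iso_aux {V W : Type*} [Fintype V] [Fintype W] {G : SimpleGraph V}
    {H : SimpleGraph W} (e : G ≃g H) :
    {x : ℝ | ∃ f : V → ℝ, f ≠ 0 ∧
      ∀ v : V, ∑ u : V, (if G.Adj v u then f u else 0) = x * f v} ⊆
    {x : ℝ | ∃ f : W → ℝ, f ≠ 0 ∧
      ∀ v : W, ∑ u : W, (if H.Adj v u then f u else 0) = x * f v} := by
  rintro x ⟨f, hf, hx⟩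
  refine ⟨fun w => f (e.symm w), ?_, ?_⟩
  · intro h0
    apply hf
    ext v
    simpa using congrFun h0 (e v)
  · intro w
    rw [← hx (e.symm w)]
    refine (Fintype.sum_equiv e.symm.toEquiv _ _ ?_)
    intro y
    have : G.Adj (e.symm w) (e.symm y) ↔ H.Adj w y := e.symm.map_adj_iff
    simp [this]

lemma specRad_iso {V W : Type*} [Fintype V] [Fintype W] {G : SimpleGraph V}
    {H : SimpleGraph W} (e : G ≃g H) : specRad G = specRad H := by
  unfold specRad
  rw [Set.Subset.antisymm (specRad_iso_aux e) (specRad_iso_aux e.symm)]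

lemma K_adj_none {m : ℕ} (i : Fin m) : (joinK1 (triPlusIsolated m)).Adj none (some i) := by
  simp [joinK1]

lemma K_adj_some {m : ℕ} (i j : Fin m) : (joinK1 (triPlusIsolated m)).Adj (some i) (some j) ↔
    i ≠ j ∧ i.val < 3 ∧ j.val < 3 := by
  simp [joinK1, triPlusIsolated]
  grind

lemma sum_fin3 (m : ℕ) (F : Fin (m + 3) → ℝ) : ∑ i, F i =
    F ⟨0, by omega⟩ + (F ⟨1, by omega⟩ + (F ⟨2, by omega⟩ +
      ∑ j : Fin m, F ⟨j.val + 3, by omega⟩)) := by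
  rw [Fin.sum_univ_succ, Fin.sum_univ_succ, Fin.sum_univ_succ]
  rfl

lemma K_specRad (m : ℕ) (r : ℝ) (hr : 2 < r) (h : (r ^ 2 - m - 3) * (r - 2) = 6) :
    r ≤ specRad (joinK1 (triPlusIsolated (m + 3))) := by
  refine le_csSup (eig_finite _).bddAbove ?_
  have hr2 : r - 2 ≠ 0 := by linarith
  have hr0 : r ≠ 0 := by linarith
  refine ⟨fun o => o.elim 1 (fun i => if i.val < 3 then 1 / (r - 2) else 1 / r), ?_, ?_⟩
  · intro h0
    simpa using congrFun h0 none
  · intro v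
    rw [Fintype.sum_option, sum_fin3]
    cases v with
    | none =>
      simp [K_adj_none]
      field_simp
      linarith
    | some i =>
      have hi : (joinK1 (triPlusIsolated (m + 3))).Adj (some i) none := (K_adj_none i).symm
      simp only [hi, K_adj_some]
      by_cases h3 : i.val < 3
      · rcases i with ⟨i, hi⟩
        simp only at h3
        interval_cases i
        · simp
          field_simp; ring
        · simp
          field_simp; ring
        · simp
          field_simp; ring
      · simp [h3]
        field_simp

lemma real_mono (r ρ N : ℝ) (hr : 63 ≤ r) (hle : r ≤ ρ) (h : (r ^ 2 - N + 1) * (r - 2) = 6) :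
    6 ≤ (ρ ^ 2 - N + 1) * (ρ - 2) := by
  have h0 : 0 ≤ r ^ 2 - N + 1 := by
    by_contra hcon
    push Not at hcon
    nlinarith
  have h1 : r ^ 2 ≤ ρ ^ 2 := by nlinarith
  rw [← h]
  apply mul_le_mul <;> linarith

lemma exists_root (n : ℕ) (hn : 4096 ≤ n) : ∃ r : ℝ, 63 ≤ r ∧ (r ^ 2 - n + 1) * (r - 2) = 6 := by
  have hn' : (4096 : ℝ) ≤ n := by exact_mod_cast hn
  have hs := Real.sq_sqrt (show (0:ℝ) ≤ n - 1 by linarith)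
  have hs63 : 63 ≤ √((n:ℝ) - 1) := by
    apply Real.le_sqrt_of_sq_le
    linarith
  have hsn : √((n:ℝ) - 1) ≤ n := by nlinarith
  have hc : ContinuousOn (fun r : ℝ => (r ^ 2 - n + 1) * (r - 2)) (Set.Icc (√((n:ℝ) - 1)) n) := by
    fun_prop
  obtain ⟨r, hr, hr6⟩ := intermediate_value_Icc hsn hc (show (6:ℝ) ∈ _ by
    constructor
    · show ((√((n:ℝ) - 1)) ^ 2 - n + 1) * (√((n:ℝ) - 1) - 2) ≤ 6
      rw [hs]; linarith
    · show (6:ℝ) ≤ ((n:ℝ) ^ 2 - n + 1) * (n - 2)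
      have : (1:ℝ) ≤ (n:ℝ)^2 - n + 1 := by nlinarith
      nlinarith)
  exact ⟨r, hs63.trans hr.1, hr6⟩

lemma exists_iso {V : Type*} [Fintype V] {G : SimpleGraph V} (m : ℕ)
    (hV : Fintype.card V = m + 4) (u a b c : V) (hab : a ≠ b) (hac : a ≠ c) (hbc : b ≠ c)
    (hua : u ≠ a) (hub : u ≠ b) (huc : u ≠ c)
    (hG : ∀ x y, G.Adj x y ↔ x ≠ y ∧ (x = u ∨ y = u ∨
        ((x = a ∨ x = b ∨ x = c) ∧ (y = a ∨ y = b ∨ y = c)))) :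
    Nonempty (G ≃g joinK1 (triPlusIsolated (m + 3))) := by
  let i0 : Fin (m + 3) := ⟨0, by omega⟩
  let i1 : Fin (m + 3) := ⟨1, by omega⟩
  let i2 : Fin (m + 3) := ⟨2, by omega⟩
  have n01 : i0 ≠ i1 := by simp [i0, i1]
  have n02 : i0 ≠ i2 := by simp [i0, i2]
  have n12 : i1 ≠ i2 := by simp [i1, i2]
  let f : V → Option (Fin (m + 3)) := fun v =>
    if v = u then none else if v = a then some i0 else if v = b then some i1 else some i2
  have fu : f u = none := by simp [f]
  have fa : f a = some i0 := by simp [f, hua.symm]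
  have fb : f b = some i1 := by simp [f, hub.symm, hab.symm]
  have fc : f c = some i2 := by simp [f, huc.symm, hac.symm, hbc.symm]
  obtain ⟨g, hg⟩ := Finset.exists_equiv_extend_of_card_eq (α := V)
    (t := (Finset.univ : Finset (Option (Fin (m + 3)))))
    (by simp [hV]) (s := {u, a, b, c}) (f := f) (by simp) (by
      intro x hx y hy hxy
      simp at hx hy
      rcases hx with rfl | rfl | rfl | rfl <;> rcases hy with rfl | rfl | rfl | rfl <;>
        simp_all)
  let e : V ≃ Option (Fin (m + 3)) := g.trans (Equiv.subtypeUnivEquiv (by simp))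
  have he : ∀ v, e v = (g v : Option (Fin (m + 3))) := fun v => rfl
  have eu : e u = none := by rw [he, hg u (by simp), fu]
  have ea : e a = some i0 := by rw [he, hg a (by simp), fa]
  have eb : e b = some i1 := by rw [he, hg b (by simp), fb]
  have ec : e c = some i2 := by rw [he, hg c (by simp), fc]
  have hlt : ∀ x i, e x = some i → (i.val < 3 ↔ (x = a ∨ x = b ∨ x = c)) := by
    intro x i hx
    constructor
    · intro hi
      have : i = i0 ∨ i = i1 ∨ i = i2 := by
        simp only [Fin.ext_iff, i0, i1, i2]; omega
      rcases this with rfl | rfl | rfl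
      · left; exact e.injective (hx.trans ea.symm)
      · right; left; exact e.injective (hx.trans eb.symm)
      · right; right; exact e.injective (hx.trans ec.symm)
    · rintro (rfl | rfl | rfl)
      · rw [ea] at hx; simp at hx; simp [← hx, i0]
      · rw [eb] at hx; simp at hx; simp [← hx, i1]
      · rw [ec] at hx; simp at hx; simp [← hx, i2]
  have hnone : ∀ x, e x = none → x = u := fun x hx => e.injective (hx.trans eu.symm)
  refine ⟨⟨e, ?_⟩⟩
  intro x y
  rw [hG]
  have hxy : x = y ↔ e x = e y := e.injective.eq_iff.symm
  cases hx : e x with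
  | none =>
    have hxu := hnone x hx
    cases hy : e y with
    | none => 
      have hyu := hnone y hy
      simp [hxu, hyu]
    | some j =>
      simp only [K_adj_none, true_iff]
      refine ⟨?_, Or.inl hxu⟩
      rw [ne_eq, hxy, hx, hy]; simp
  | some i =>
    have hxu : x ≠ u := by rintro rfl; rw [eu] at hx; simp at hx
    cases hy : e y with
    | none =>
      have hyu := hnone y hy
      simp only [(K_adj_none i).symm, true_iff]
      refine ⟨?_, Or.inr (Or.inl hyu)⟩
      rw [ne_eq, hxy, hx, hy]; simp
    | some j =>
      have hyu : y ≠ u := by rintro rfl; rw [eu] at hy; simp at hy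
      rw [K_adj_some, hlt x i hx, hlt y j hy, ne_eq x y, hxy, hx, hy]
      simp [hxu, hyu]

lemma main_iso (m : ℕ) (hn : 4096 ≤ m + 4) {V : Type*} [Fintype V]
    (hV : Fintype.card V = m + 4) (G : SimpleGraph V) (hG : NoTwo G) (r : ℝ) (hr : 63 ≤ r)
    (hr6 : (r ^ 2 - (m + 4 : ℕ) + 1) * (r - 2) = 6) (hle : r ≤ specRad G) :
    Nonempty (G ≃g joinK1 (triPlusIsolated (m + 3))) := by
  set S := {x : ℝ | ∃ f : V → ℝ, f ≠ 0 ∧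
      ∀ v : V, ∑ u : V, (if G.Adj v u then f u else 0) = x * f v} with hS
  have hne : S.Nonempty := by
    by_contra hcon
    rw [Set.not_nonempty_iff_eq_empty] at hcon
    have : specRad G = 0 := by
      unfold specRad; rw [← hS, hcon, Real.sSup_empty]
    linarith
  have hmem : specRad G ∈ S := hne.csSup_mem (eig_finite G)
  set ρ := specRad G with hρ
  obtain ⟨f, hf, hx⟩ := hmem
  have : Nonempty V := by rw [← Fintype.card_pos_iff]; omega
  obtain ⟨u, hu⟩ := Finite.exists_max (fun v => |f v|)
  have hu0 : 0 < |f u| := by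
    by_contra hcon
    apply hf
    ext v
    have := hu v
    have := abs_nonneg (f v)
    exact abs_eq_zero.1 (by linarith)
  have hρ6 : 6 ≤ (ρ ^ 2 - Fintype.card V + 1) * (ρ - 2) := by
    rw [hV]
    exact real_mono r ρ _ hr hle hr6
  obtain ⟨a, b, c, h1, h2, h3, h4, h5, h6, h7⟩ := final_struct hG u (fun v => |f v| / |f u|) ρ
    (hr.trans hle) (fun v => by positivity) (div_self hu0.ne')
    (fun v => (div_le_one hu0).2 (hu v)) (fun v => by
      rw [← Finset.sum_div, ← mul_div_assoc]
      gcongr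
      have hρ0 : 0 ≤ ρ := by linarith
      calc ρ * |f v| = |ρ * f v| := by rw [abs_mul, abs_of_nonneg hρ0]
        _ = |∑ u with G.Adj v u, f u| := by rw [← hx v, ← Finset.sum_filter]
        _ ≤ _ := Finset.abs_sum_le_sum_abs _ _) (by omega) hρ6
  exact exists_iso m hV u a b c h1 h2 h3 h4 h5 h6 h7

/-- For `n ≥ 4096`, `K₁ ∇ (K₃ ∪ (n-4)K₁)` is the unique graph (up to isomorphism)
maximizing the spectral radius among all `n`-vertex graphs without `2` pairwise
edge-disjoint cycles. -/
theorem spectral_extremal_k2 (n : ℕ) (hn : 4096 ≤ n) {V : Type*} [Fintype V]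
    (hV : Fintype.card V = n) (G : SimpleGraph V) (hG : phi G ≤ 1) :
    specRad G ≤ specRad (joinK1 (triPlusIsolated (n - 1))) ∧
    (specRad G = specRad (joinK1 (triPlusIsolated (n - 1))) ↔
      Nonempty (G ≃g joinK1 (triPlusIsolated (n - 1)))) := by
  obtain ⟨m, rfl⟩ : ∃ m, n = m + 4 := ⟨n - 4, by omega⟩
  have hm : m + 4 - 1 = m + 3 := by omega
  rw [hm]
  obtain ⟨r, hr, hr6⟩ := exists_root (m + 4) hn
  have hK : r ≤ specRad (joinK1 (triPlusIsolated (m + 3))) := by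
    apply K_specRad m r (by linarith)
    rw [← hr6]; push_cast; ring
  have hmain : specRad (joinK1 (triPlusIsolated (m + 3))) ≤ specRad G →
      Nonempty (G ≃g joinK1 (triPlusIsolated (m + 3))) := fun h =>
    main_iso m hn hV G (noTwo_of_phi G hG) r hr hr6 (hK.trans h)
  refine ⟨?_, fun h => hmain h.ge, fun ⟨e⟩ => specRad_iso e⟩
  by_contra hcon
  push Not at hcon
  obtain ⟨e⟩ := hmain hcon.le
  exact hcon.ne' (specRad_iso e)

end PaperEDC
end
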